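/- For every ε > 0 there exists L > 0 with the following property. Let X and Y be independent finitely supported random variables taking values in G = 𝔽₂ⁿ. Then there exists a subspace V ⊆ G with H[𝐔_V] ≤ L (H[X] + H[Y]) such that H[π_V(X) + π_V(Y)] ≥ H[π_V(X)] + H[π_V(Y)] − ε (H[X] + H[Y]). -/

import Mathlib

open Real Pointwise

noncomputable section

abbrev Fvec (n : ℕ) : Type := Fin n → ZMod 2

/-- Shannon entropy (natural log) of a finitely supported distribution. -/
def ent {A : Type*} (p : A → ℝ) : ℝ := ∑ᶠ a, Real.negMulLog (p a)

/-- `p` is a (finitely supported) probability distribution. -/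
def IsDist {A : Type*} (p : A → ℝ) : Prop := (∀ a, 0 ≤ p a) ∧ ∑ᶠ a, p a = 1

/-- Pushforward of a distribution along a map: the distribution of `f(X)` for `X ∼ p`. -/
def push {A B : Type*} (f : A → B) (p : A → ℝ) : B → ℝ := fun b => ∑ᶠ a ∈ f ⁻¹' {b}, p a

/-- Joint distribution of a pair of independent random variables. -/
def prodDist {A B : Type*} (p : A → ℝ) (q : B → ℝ) : A × B → ℝ := fun z => p z.1 * q z.2

/-- Distribution of `X + Y` for independent `X ∼ p`, `Y ∼ q`. -/
def conv {A : Type*} [AddGroup A] (p q : A → ℝ) : A → ℝ := fun z => ∑ᶠ x, p x * q (z - x)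

/-- The distribution of `X` conditioned on `U = b`, where `r` is the joint distribution of `(X, U)`. -/
def fiber {A B : Type*} (r : A × B → ℝ) (b : B) : A → ℝ := fun a => r (a, b) / push Prod.snd r b

/-- Conditional entropy `H[X | U]` of a joint distribution `r` of `(X, U)`. -/
def condEnt {A B : Type*} (r : A × B → ℝ) : ℝ := ∑ᶠ b, push Prod.snd r b * ent (fiber r b)

/-- Doubling mass `s[X ; Y]` (of independent copies with distributions `p`, `q`). -/
def sDouble {A : Type*} [AddGroup A] (p q : A → ℝ) : ℝ := ent p + ent q - ent (conv p q)

/-- Conditional doubling mass `s[X | U ; Y | W] = 𝔼_{u ∼ U, w ∼ W} s[X_u ; Y_w]`,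
where `r1`, `r2` are the joint distributions of `(X, U)` and `(Y, W)`. -/
def sCond {A U W : Type*} [AddGroup A] (r1 : A × U → ℝ) (r2 : A × W → ℝ) : ℝ :=
  ∑ᶠ u, ∑ᶠ w, push Prod.snd r1 u * push Prod.snd r2 w * sDouble (fiber r1 u) (fiber r2 w)

/-- Conditional mutual information `I[A : B | S]` of a joint distribution of `(A, B, S)`. -/
def condMI {A B S : Type*} (r : A × B × S → ℝ) : ℝ :=
  ent (push (fun z => (z.1, z.2.2)) r) + ent (push (fun z => z.2) r)
    - ent r - ent (push (fun z => z.2.2) r)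

/-- Uniform distribution on a set. -/
def unifOn {A : Type*} (s : Set A) : A → ℝ := s.indicator fun _ => (Nat.card s : ℝ)⁻¹

/-- Entropic Ruzsa distance `d[X ; Y]`. -/
def dRuzsa {A : Type*} [AddGroup A] (p q : A → ℝ) : ℝ := ent (conv p q) - ent p / 2 - ent q / 2

/-- Joint distribution of `(X, X + Y)` for independent `X ∼ p`, `Y ∼ q`. -/
def jointSum {A : Type*} [AddGroup A] (p q : A → ℝ) : A × A → ℝ :=
  push (fun z : A × A => (z.1, z.1 + z.2)) (prodDist p q)

/-- Joint distribution of `(X, π_V(X))`. -/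
def selfProj {n : ℕ} (V : Submodule (ZMod 2) (Fvec n)) (p : Fvec n → ℝ) :
    Fvec n × (Fvec n ⧸ V) → ℝ := push (fun x => (x, V.mkQ x)) p

/-- Joint distribution of independent `(X₁, X₂, Y₁, Y₂)` with `X₁, X₂ ∼ p` and `Y₁, Y₂ ∼ q`. -/
def quad {A : Type*} (p q : A → ℝ) : A × A × A × A → ℝ :=
  fun z => p z.1 * p z.2.1 * q z.2.2.1 * q z.2.2.2

/-- Distribution of `X₁ + ⋯ + X_k` for independent `Xᵢ ∼ p i`. -/
def indepSum {A : Type*} [AddCommGroup A] (k : ℕ) (p : Fin k → A → ℝ) : A → ℝ :=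
  push (fun x : Fin k → A => ∑ i, x i) (fun x => ∏ i, p i (x i))

/-- Statement `A(η, L, c)` from the paper. -/
def StA (η L c : ℝ) : Prop :=
  ∀ (n : ℕ) (p q : Fvec n → ℝ), IsDist p → IsDist q →
    ent (conv p q) ≤ (1 - η) * (ent p + ent q) →
    ∃ V : Submodule (ZMod 2) (Fvec n),
      ent (unifOn (V : Set (Fvec n))) ≤ L * (ent p + ent q) ∧
      ent (push V.mkQ p) + ent (push V.mkQ q) ≤ (1 - c) * (ent p + ent q)

/-- Statement `B(η, ε, L)` from the paper. -/
def StB (η ε L : ℝ) : Prop :=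
  ∀ (n : ℕ) (p q : Fvec n → ℝ), IsDist p → IsDist q →
    ∃ V : Submodule (ZMod 2) (Fvec n),
      ent (unifOn (V : Set (Fvec n))) ≤ L * (ent p + ent q) ∧
      ent (conv (push V.mkQ p) (push V.mkQ q)) ≥
        (1 - η) * (ent (push V.mkQ p) + ent (push V.mkQ q)) - ε * (ent p + ent q)


namespace PF

open Classical in
def ind (P : Prop) : ℝ := if P then 1 else 0

lemma ind_true {P : Prop} (h : P) : ind P = 1 := by simp [ind, h]
lemma ind_false {P : Prop} (h : ¬ P) : ind P = 0 := by simp [ind, h]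
lemma ind_nonneg (P : Prop) : 0 ≤ ind P := by unfold ind; split_ifs <;> norm_num
lemma ind_le_one (P : Prop) : ind P ≤ 1 := by unfold ind; split_ifs <;> norm_num
lemma ind_and (P Q : Prop) : ind (P ∧ Q) = ind P * ind Q := by
  unfold ind; by_cases hP : P <;> by_cases hQ : Q <;> simp [hP, hQ]
lemma ind_congr {P Q : Prop} (h : P ↔ Q) : ind P = ind Q := by rw [propext h]
lemma ind_mono {P Q : Prop} (h : P → Q) : ind P ≤ ind Q := by
  unfold ind; by_cases hP : P <;> by_cases hQ : Q <;> simp_all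

/-- probability weights -/
def Pr {Ω : Type*} [Fintype Ω] (p : Ω → ℝ) : Prop := (∀ ω, 0 ≤ p ω) ∧ ∑ ω, p ω = 1

/-- mass of the fibre of `f` through `ω` -/
def mm {Ω α : Type*} [Fintype Ω] (p : Ω → ℝ) (f : Ω → α) (ω : Ω) : ℝ :=
  ∑ ω', p ω' * ind (f ω' = f ω)

/-- entropy of `f` under `p` -/
def HH {Ω α : Type*} [Fintype Ω] (p : Ω → ℝ) (f : Ω → α) : ℝ :=
  ∑ ω, p ω * (-Real.log (mm p f ω))

section basic
variable {Ω Ω' α β γ δ : Type*} [Fintype Ω] [Fintype Ω'] {p : Ω → ℝ} {q : Ω' → ℝ}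

lemma mm_nonneg (hp : ∀ ω, 0 ≤ p ω) (f : Ω → α) (ω : Ω) : 0 ≤ mm p f ω :=
  Finset.sum_nonneg fun _ _ => mul_nonneg (hp _) (ind_nonneg _)

lemma le_mm (hp : ∀ ω, 0 ≤ p ω) (f : Ω → α) (ω : Ω) : p ω ≤ mm p f ω := by
  have := Finset.single_le_sum (f := fun ω' => p ω' * ind (f ω' = f ω))
    (fun _ _ => mul_nonneg (hp _) (ind_nonneg _)) (Finset.mem_univ ω)
  simpa [ind, mm] using this

lemma mm_le_one (hp : Pr p) (f : Ω → α) (ω : Ω) : mm p f ω ≤ 1 := by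
  rw [← hp.2]
  exact Finset.sum_le_sum fun i _ => by
    have := ind_le_one (f i = f ω); nlinarith [hp.1 i]

lemma mm_pos (hp : ∀ ω, 0 ≤ p ω) (f : Ω → α) {ω : Ω} (h : p ω ≠ 0) : 0 < mm p f ω :=
  lt_of_lt_of_le (lt_of_le_of_ne (hp ω) (Ne.symm h)) (le_mm hp f ω)

lemma mm_congr_val (f : Ω → α) {ω ω' : Ω} (h : f ω = f ω') : mm p f ω = mm p f ω' := by
  unfold mm; rw [h]

lemma HH_nonneg (hp : Pr p) (f : Ω → α) : 0 ≤ HH p f :=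
  Finset.sum_nonneg fun ω _ => mul_nonneg (hp.1 _)
    (by have := Real.log_nonpos (mm_nonneg hp.1 f ω) (mm_le_one hp f ω); linarith)

/-- determination on the support -/
lemma HH_mono (hp : Pr p) (f : Ω → α) (g : Ω → β)
    (h : ∀ ω ω', p ω ≠ 0 → p ω' ≠ 0 → g ω = g ω' → f ω = f ω') : HH p f ≤ HH p g := by
  refine Finset.sum_le_sum fun ω _ => ?_
  by_cases h0 : p ω = 0
  · simp [h0]
  refine mul_le_mul_of_nonneg_left ?_ (hp.1 ω)
  have : mm p g ω ≤ mm p f ω := by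
    refine Finset.sum_le_sum fun ω' _ => ?_
    by_cases h1 : p ω' = 0
    · simp [h1]
    exact mul_le_mul_of_nonneg_left (ind_mono fun e => h _ _ h1 h0 e) (hp.1 _)
  have := Real.log_le_log (mm_pos hp.1 g h0) this
  linarith

lemma HH_congr (hp : Pr p) (f : Ω → α) (g : Ω → β)
    (h : ∀ ω ω', p ω ≠ 0 → p ω' ≠ 0 → (f ω = f ω' ↔ g ω = g ω')) : HH p f = HH p g :=
  le_antisymm (HH_mono hp f g fun a b ha hb => (h a b ha hb).2)
    (HH_mono hp g f fun a b ha hb => (h a b ha hb).1)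

lemma HH_congr' (f : Ω → α) (g : Ω → β)
    (h : ∀ ω ω', (f ω = f ω' ↔ g ω = g ω')) : HH p f = HH p g := by
  unfold HH mm
  simp_rw [fun a b => ind_congr (h a b)]

lemma HH_const (hp : Pr p) (f : Ω → α) (h : ∀ ω ω', f ω = f ω') : HH p f = 0 := by
  unfold HH mm
  simp_rw [fun a b => ind_true (h a b)]
  simp [hp.2]

lemma sum_class_le (hp : ∀ ω, 0 ≤ p ω) (f : Ω → α) (a : α) :
    ∑ ω, p ω * ind (f ω = a) / mm p f ω ≤ 1 := by
  have : ∀ ω, p ω * ind (f ω = a) / mm p f ω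
      = p ω * ind (f ω = a) / (∑ ω', p ω' * ind (f ω' = a)) := by
    intro ω
    by_cases h : f ω = a
    · unfold mm; rw [h]
    · simp [ind_false h]
  simp_rw [this]
  rw [← Finset.sum_div]
  exact div_self_le_one _

lemma HH_submod (hp : Pr p) (f : Ω → α) (g : Ω → β) (k : Ω → γ) :
    HH p (fun ω => (f ω, g ω, k ω)) + HH p k
      ≤ HH p (fun ω => (f ω, k ω)) + HH p (fun ω => (g ω, k ω)) := by
  set F := mm p (fun ω => (f ω, k ω)) with hF
  set Gm := mm p (fun ω => (g ω, k ω)) with hG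
  set T := mm p (fun ω => (f ω, g ω, k ω)) with hT
  set K := mm p k with hK
  have key : ∑ ω, p ω * (F ω * Gm ω / (T ω * K ω)) ≤ 1 := by
    have h1 : ∀ ω, p ω * (F ω * Gm ω / (T ω * K ω)) =
        ∑ ω₁, ∑ ω₂, p ω * (p ω₁ * ind ((f ω₁, k ω₁) = (f ω, k ω))) *
          (p ω₂ * ind ((g ω₂, k ω₂) = (g ω, k ω))) / (T ω * K ω) := by
      intro ω
      rw [hF, hG]
      show p ω * ((∑ ω₁, _) * (∑ ω₂, _) / _) = _
      rw [Finset.sum_mul_sum]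
      simp only [Finset.sum_div, Finset.mul_sum]
      refine Finset.sum_congr rfl fun _ _ => Finset.sum_congr rfl fun _ _ => ?_
      ring
    simp_rw [h1]
    rw [Finset.sum_comm]
    calc ∑ ω₁, ∑ ω, ∑ ω₂, p ω * (p ω₁ * ind ((f ω₁, k ω₁) = (f ω, k ω))) *
          (p ω₂ * ind ((g ω₂, k ω₂) = (g ω, k ω))) / (T ω * K ω)
        = ∑ ω₁, ∑ ω₂, ∑ ω, p ω₁ * (p ω₂ * ind (k ω₂ = k ω₁) / K ω₁) *
            (p ω * ind ((f ω, g ω, k ω) = (f ω₁, g ω₂, k ω₁)) / T ω) := by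
          refine Finset.sum_congr rfl fun ω₁ _ => ?_
          rw [Finset.sum_comm]
          refine Finset.sum_congr rfl fun ω₂ _ => Finset.sum_congr rfl fun ω _ => ?_
          by_cases e1 : k ω = k ω₁
          · have : K ω = K ω₁ := mm_congr_val k e1
            rw [this]
            by_cases e2 : k ω₂ = k ω₁
            · by_cases e3 : f ω₁ = f ω <;> by_cases e4 : g ω₂ = g ω <;>
                simp [ind, e1, e2, e3, e4, eq_comm] 
              all_goals first
                | (field_simp; done)
                | (intro h; exact absurd h.symm e4)
                | (intro h; exact absurd h.symm e3)
            · simp [ind, e1, e2]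
          · have : ¬ k ω₁ = k ω := fun h => e1 h.symm
            simp [ind, e1, this]
      _ ≤ ∑ ω₁, ∑ ω₂, p ω₁ * (p ω₂ * ind (k ω₂ = k ω₁) / K ω₁) := by
          refine Finset.sum_le_sum fun ω₁ _ => Finset.sum_le_sum fun ω₂ _ => ?_
          rw [← Finset.mul_sum]
          refine mul_le_of_le_one_right ?_ ?_
          · exact mul_nonneg (hp.1 _) (div_nonneg (mul_nonneg (hp.1 _) (ind_nonneg _))
              (mm_nonneg hp.1 _ _))
          · exact sum_class_le hp.1 (fun ω => (f ω, g ω, k ω)) _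
      _ ≤ ∑ ω₁, p ω₁ := by
          refine Finset.sum_le_sum fun ω₁ _ => ?_
          rw [← Finset.mul_sum, ← Finset.sum_div]
          exact mul_le_of_le_one_right (hp.1 _) (div_self_le_one _)
      _ = 1 := hp.2
  have h2 : ∀ ω, p ω * (-Real.log (T ω)) + p ω * (-Real.log (K ω))
      - p ω * (-Real.log (F ω)) - p ω * (-Real.log (Gm ω))
      ≤ p ω * (F ω * Gm ω / (T ω * K ω)) - p ω := by
    intro ω
    by_cases h0 : p ω = 0
    · simp [h0]
    have a1 : 0 < F ω := mm_pos hp.1 _ h0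
    have a2 : 0 < Gm ω := mm_pos hp.1 _ h0
    have a3 : 0 < T ω := mm_pos hp.1 _ h0
    have a4 : 0 < K ω := mm_pos hp.1 _ h0
    have := Real.log_le_sub_one_of_pos (x := F ω * Gm ω / (T ω * K ω)) (by positivity)
    rw [Real.log_div (by positivity) (by positivity), Real.log_mul a1.ne' a2.ne',
      Real.log_mul a3.ne' a4.ne'] at this
    nlinarith [hp.1 ω]
  have h3 := Finset.sum_le_sum (s := Finset.univ) fun ω _ => h2 ω
  simp only [Finset.sum_add_distrib, Finset.sum_sub_distrib] at h3
  unfold HH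
  have := hp.2
  linarith

/-- pushforward along a map -/
def Push (φ : Ω' → Ω) (q : Ω' → ℝ) (p : Ω → ℝ) : Prop :=
  ∀ g : Ω → ℝ, ∑ ω', q ω' * g (φ ω') = ∑ ω, p ω * g ω

lemma Push.HH {φ : Ω' → Ω} (h : Push φ q p) (f : Ω → α) :
    HH q (fun ω => f (φ ω)) = HH p f := by
  unfold PF.HH
  have : ∀ ω, mm q (fun ω => f (φ ω)) ω = mm p f (φ ω) := fun ω => h (fun a => ind (f a = f (φ ω)))
  simp_rw [this]
  exact h fun ω => -Real.log (mm p f ω)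

def pd (p : Ω → ℝ) (q : Ω' → ℝ) : Ω × Ω' → ℝ := fun x => p x.1 * q x.2

lemma sum_pd (p : Ω → ℝ) (q : Ω' → ℝ) (g : Ω → Ω' → ℝ) :
    ∑ x, pd p q x * g x.1 x.2 = ∑ a, p a * ∑ b, q b * g a b := by
  rw [Fintype.sum_prod_type]
  simp only [pd, Finset.mul_sum, mul_assoc]

lemma Pr.pd (hp : Pr p) (hq : Pr q) : Pr (pd p q) := by
  refine ⟨fun x => mul_nonneg (hp.1 _) (hq.1 _), ?_⟩
  have := sum_pd p q fun _ _ => 1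
  simpa [hp.2, hq.2] using this

lemma push_fst (hq : Pr q) : Push Prod.fst (pd p q) p := by
  intro g
  have := sum_pd p q fun a _ => g a
  rw [this]
  simp [← Finset.sum_mul, hq.2]

lemma push_snd (hp : Pr p) : Push Prod.snd (pd p q) q := by
  intro g
  have := sum_pd p q fun _ b => g b
  rw [this]
  simp [← Finset.sum_mul, hp.2]

lemma HH_pd (hp : Pr p) (hq : Pr q) (f : Ω → α) (g : Ω' → β) :
    HH (pd p q) (fun x => (f x.1, g x.2)) = HH p f + HH q g := by
  have hm : ∀ x, mm (pd p q) (fun x => (f x.1, g x.2)) x = mm p f x.1 * mm q g x.2 := by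
    intro x
    unfold mm
    rw [Finset.sum_mul_sum, Fintype.sum_prod_type]
    refine Finset.sum_congr rfl fun a _ => Finset.sum_congr rfl fun b _ => ?_
    simp only [Prod.mk.injEq, ind_and, pd]
    ring
  rw [← (push_fst (p := p) hq).HH f, ← (push_snd (q := q) hp).HH g]
  unfold PF.HH
  rw [← Finset.sum_add_distrib]
  refine Finset.sum_congr rfl fun x _ => ?_
  have e1 : mm (pd p q) (fun x => f x.1) x = mm p f x.1 :=
    push_fst hq (fun a => ind (f a = f x.1))
  have e2 : mm (pd p q) (fun x => g x.2) x = mm q g x.2 :=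
    push_snd hp (fun a => ind (g a = g x.2))
  rw [hm, e1, e2]
  by_cases h0 : pd p q x = 0
  · simp [h0]
  have h1 : p x.1 ≠ 0 := fun h => h0 (by simp [pd, h])
  have h2 : q x.2 ≠ 0 := fun h => h0 (by simp [pd, h])
  rw [Real.log_mul (mm_pos hp.1 _ h1).ne' (mm_pos hq.1 _ h2).ne']
  ring

/-- law of `f` -/
def law (p : Ω → ℝ) (f : Ω → α) (a : α) : ℝ := ∑ ω, p ω * ind (f ω = a)

lemma push_law [Fintype α] (p : Ω → ℝ) (f : Ω → α) : Push f p (law p f) := by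
  intro g
  unfold law
  simp only [Finset.sum_mul]
  rw [Finset.sum_comm]
  refine Finset.sum_congr rfl fun ω _ => ?_
  rw [Finset.sum_eq_single (f ω)]
  · simp [ind]
  · intro b _ hb; simp [ind, hb.symm]
  · simp

lemma Pr.law [Fintype α] (hp : Pr p) (f : Ω → α) : Pr (law p f) := by
  refine ⟨fun a => Finset.sum_nonneg fun _ _ => mul_nonneg (hp.1 _) (ind_nonneg _), ?_⟩
  have := push_law p f fun _ => 1
  simp at this
  rw [← this, hp.2]

lemma HH_id [Fintype α] (z : α → ℝ) : HH z id = ∑ a, negMulLog (z a) := by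
  unfold HH mm negMulLog
  refine Finset.sum_congr rfl fun a _ => ?_
  have : ∑ x, z x * ind (id x = id a) = z a := by
    rw [Finset.sum_eq_single a]
    · simp [ind]
    · intro b _ hb; simp [ind, hb]
    · simp
  rw [this]; ring

lemma HH_eq_law [Fintype α] (p : Ω → ℝ) (f : Ω → α) :
    HH p f = ∑ a, negMulLog (law p f a) := by
  rw [← HH_id, ← (push_law p f).HH id]; rfl

/-- conditional weights on the `B`-fibre of `ω` -/
def cnd (p : Ω → ℝ) (B : Ω → β) (ω : Ω) : Ω → ℝ :=
  fun ω' => p ω' * ind (B ω' = B ω) / mm p B ω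

lemma Pr.cnd (hp : Pr p) (B : Ω → β) {ω : Ω} (h : p ω ≠ 0) : Pr (cnd p B ω) := by
  refine ⟨fun _ => div_nonneg (mul_nonneg (hp.1 _) (ind_nonneg _)) (mm_nonneg hp.1 _ _), ?_⟩
  unfold PF.cnd
  rw [← Finset.sum_div]
  exact div_self (mm_pos hp.1 B h).ne'

lemma cnd_ne_zero {B : Ω → β} {ω ω' : Ω} (h : cnd p B ω ω' ≠ 0) : p ω' ≠ 0 ∧ B ω' = B ω := by
  unfold cnd at h
  constructor
  · rintro h0; simp [h0] at h
  · by_contra h0; simp [ind_false h0] at h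

/-- disintegration -/
lemma disint (hp : Pr p) (B : Ω → β) (g : Ω → ℝ) :
    ∑ ω, p ω * ∑ ω', cnd p B ω ω' * g ω' = ∑ ω, p ω * g ω := by
  simp only [Finset.mul_sum]
  rw [Finset.sum_comm]
  refine Finset.sum_congr rfl fun ω' _ => ?_
  by_cases h0 : p ω' = 0
  · simp [h0, cnd]
  have : ∀ ω, p ω * (cnd p B ω ω' * g ω') = (p ω' * g ω' / mm p B ω') * (p ω * ind (B ω = B ω')) := by
    intro ω
    unfold cnd
    by_cases e : B ω' = B ω
    · rw [mm_congr_val B e, ind_true e, ind_true e.symm]; ring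
    · rw [ind_false e, ind_false (Ne.symm e)]; ring
  simp_rw [this]
  rw [← Finset.mul_sum]
  exact div_mul_cancel₀ _ (mm_pos hp.1 B h0).ne'

lemma mm_cnd (f : Ω → α) (B : Ω → β) {ω ω' : Ω} (h : B ω' = B ω) :
    mm (cnd p B ω) f ω' = mm p (fun x => (f x, B x)) ω' / mm p B ω := by
  show ∑ x, p x * ind (B x = B ω) / mm p B ω * ind (f x = f ω')
    = (∑ x, p x * ind ((f x, B x) = (f ω', B ω'))) / mm p B ω
  rw [Finset.sum_div]
  refine Finset.sum_congr rfl fun x _ => ?_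
  simp only [Prod.mk.injEq, ind_and, h]
  ring

lemma HH_chain (hp : Pr p) (f : Ω → α) (B : Ω → β) :
    HH p (fun x => (f x, B x)) - HH p B = ∑ ω, p ω * HH (cnd p B ω) f := by
  have h1 : ∀ ω, p ω * HH (cnd p B ω) f = p ω * ∑ ω', cnd p B ω ω' *
      (-Real.log (mm p (fun x => (f x, B x)) ω') + Real.log (mm p B ω')) := by
    intro ω
    unfold HH
    congr 1
    refine Finset.sum_congr rfl fun ω' _ => ?_
    by_cases h0 : cnd p B ω ω' = 0
    · simp [h0]
    obtain ⟨a, b⟩ := cnd_ne_zero h0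
    rw [mm_cnd f B b, Real.log_div (mm_pos hp.1 _ a).ne'
      (by rw [← mm_congr_val B b]; exact (mm_pos hp.1 _ a).ne'), mm_congr_val B b]
    ring
  simp_rw [h1]
  rw [disint hp]
  unfold HH
  rw [← Finset.sum_sub_distrib]
  exact Finset.sum_congr rfl fun _ _ => by ring

lemma cnd_pd (B : Ω → α) (C : Ω' → β) (x : Ω × Ω') :
    cnd (pd p q) (fun y => (B y.1, C y.2)) x = pd (cnd p B x.1) (cnd q C x.2) := by
  funext y
  have hm : mm (pd p q) (fun x => (B x.1, C x.2)) x = mm p B x.1 * mm q C x.2 := by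
    unfold mm
    rw [Finset.sum_mul_sum, Fintype.sum_prod_type]
    refine Finset.sum_congr rfl fun a _ => Finset.sum_congr rfl fun b _ => ?_
    simp only [Prod.mk.injEq, ind_and, pd]
    ring
  unfold cnd
  rw [hm]
  simp only [Prod.mk.injEq, ind_and, pd]
  rw [div_mul_div_comm]; congr 1; ring

end basic
end PF

namespace PF

section copies
variable {Ω Ω' α β γ δ : Type*} [Fintype Ω] [Fintype Ω'] {p : Ω → ℝ} {q : Ω' → ℝ}

lemma HH_le_log (hp : Pr p) (f : Ω → α) (S : Finset α) (hS : ∀ ω, p ω ≠ 0 → f ω ∈ S) :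
    HH p f ≤ Real.log S.card := by
  have hne : S.Nonempty := by
    by_contra h
    rw [Finset.not_nonempty_iff_eq_empty] at h
    have : ∀ ω, p ω = 0 := by
      intro ω; by_contra h0; have := hS ω h0; simp [h] at this
    have h1 := hp.2
    simp [this] at h1
  have hc : (0:ℝ) < S.card := by exact_mod_cast hne.card_pos
  have key : ∑ ω, p ω / mm p f ω ≤ S.card := by
    have : ∀ ω, p ω / mm p f ω = ∑ s ∈ S, p ω * ind (f ω = s) / mm p f ω := by
      intro ω
      by_cases h0 : p ω = 0
      · simp [h0]
      rw [Finset.sum_eq_single (f ω)]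
      · simp [ind]
      · intro b _ hb; simp [ind, hb.symm]
      · intro h; exact absurd (hS ω h0) h
    simp_rw [this]
    rw [Finset.sum_comm]
    calc _ ≤ ∑ s ∈ S, (1:ℝ) := Finset.sum_le_sum fun s _ => sum_class_le hp.1 f s
      _ = S.card := by simp
  have h2 : ∀ ω, p ω * (-Real.log (mm p f ω)) - p ω * Real.log S.card
      ≤ (p ω / mm p f ω) / S.card - p ω := by
    intro ω
    by_cases h0 : p ω = 0
    · simp [h0]
    have a1 : 0 < mm p f ω := mm_pos hp.1 _ h0
    have := Real.log_le_sub_one_of_pos (x := 1 / (mm p f ω * S.card)) (by positivity)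
    rw [Real.log_div (by positivity) (by positivity), Real.log_mul a1.ne' hc.ne',
      Real.log_one] at this
    have h3 := mul_le_mul_of_nonneg_left this (hp.1 ω)
    have : p ω * (1 / (mm p f ω * S.card) - 1) = (p ω / mm p f ω) / S.card - p ω := by
      field_simp
    linarith
  have h3 := Finset.sum_le_sum (s := Finset.univ) fun ω _ => h2 ω
  simp only [Finset.sum_sub_distrib, ← Finset.sum_mul, ← Finset.sum_div] at h3
  rw [hp.2] at h3
  have : (∑ ω, p ω / mm p f ω) / S.card ≤ 1 := by rw [div_le_one hc]; exact key
  unfold HH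
  linarith

/-- conditionally independent copies given `c` -/
def cc (p : Ω → ℝ) (c : Ω → α) : Ω × Ω → ℝ := fun x => p x.1 * cnd p c x.1 x.2

lemma sum_cc (p : Ω → ℝ) (c : Ω → α) (g : Ω → Ω → ℝ) :
    ∑ x, cc p c x * g x.1 x.2 = ∑ a, p a * ∑ b, cnd p c a b * g a b := by
  rw [Fintype.sum_prod_type]
  simp only [cc, Finset.mul_sum, mul_assoc]

lemma cc_fst (hp : Pr p) (c : Ω → α) : Push Prod.fst (cc p c) p := by
  intro g
  rw [sum_cc p c fun a _ => g a]
  refine Finset.sum_congr rfl fun a _ => ?_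
  by_cases h0 : p a = 0
  · simp [h0]
  rw [← Finset.sum_mul, (hp.cnd c h0).2, one_mul]

lemma cc_snd (hp : Pr p) (c : Ω → α) : Push Prod.snd (cc p c) p := by
  intro g
  rw [sum_cc p c fun _ b => g b]
  exact disint hp c g

lemma Pr.cc (hp : Pr p) (c : Ω → α) : Pr (cc p c) := by
  refine ⟨fun x => mul_nonneg (hp.1 _) (div_nonneg (mul_nonneg (hp.1 _) (ind_nonneg _))
    (mm_nonneg hp.1 _ _)), ?_⟩
  have := cc_fst hp c fun _ => 1
  simpa [hp.2] using this

lemma cc_ne_zero {c : Ω → α} {x : Ω × Ω} (h : cc p c x ≠ 0) : c x.2 = c x.1 :=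
  (cnd_ne_zero (right_ne_zero_of_mul h)).2

lemma cc_cnd (hp : Pr p) (c : Ω → α) (x : Ω × Ω) :
    cnd (cc p c) (fun y => c y.1) x = pd (cnd p c x.1) (cnd p c x.1) := by
  have hm : mm (cc p c) (fun y => c y.1) x = mm p c x.1 :=
    cc_fst hp c fun a => ind (c a = c x.1)
  funext y
  unfold pd
  conv_lhs => unfold cnd
  rw [hm]
  unfold cc
  by_cases e : c y.1 = c x.1
  · have : cnd p c y.1 y.2 = cnd p c x.1 y.2 := by
      unfold cnd; rw [e, mm_congr_val c e]
    rw [this]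
    conv_rhs => enter [1]; unfold cnd
    ring
  · simp [cnd, ind_false e]

lemma cc_chain (hp : Pr p) (c : Ω → α) (F : Ω × Ω → β) :
    HH (cc p c) (fun x => (F x, c x.1)) - HH p c
      = ∑ ω, p ω * HH (pd (cnd p c ω) (cnd p c ω)) F := by
  have := HH_chain (hp.cc c) F (fun y => c y.1)
  rw [(cc_fst hp c).HH c] at this
  rw [this]
  simp_rw [cc_cnd hp]
  exact cc_fst hp c fun ω => HH (pd (cnd p c ω) (cnd p c ω)) F

lemma cc_HH (hp : Pr p) (c : Ω → α) (f : Ω → β) (g : Ω → γ) :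
    HH (cc p c) (fun x => ((f x.1, g x.2), c x.1)) =
      HH p (fun x => (f x, c x)) + HH p (fun x => (g x, c x)) - HH p c := by
  have h1 := cc_chain hp c fun x => (f x.1, g x.2)
  have h2 := HH_chain hp f c
  have h3 := HH_chain hp g c
  have : ∑ ω, p ω * HH (pd (cnd p c ω) (cnd p c ω)) (fun x => (f x.1, g x.2)) =
      ∑ ω, p ω * HH (cnd p c ω) f + ∑ ω, p ω * HH (cnd p c ω) g := by
    rw [← Finset.sum_add_distrib]
    refine Finset.sum_congr rfl fun ω _ => ?_
    by_cases h0 : p ω = 0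
    · simp [h0]
    rw [HH_pd (hp.cnd c h0) (hp.cnd c h0)]; ring
  linarith

/-- mean entropy of the sum of two independent samples from the same fibre -/
def same [Add γ] (p : Ω → ℝ) (c : Ω → α) (U : Ω → γ) : ℝ :=
  ∑ ω, p ω * HH (pd (cnd p c ω) (cnd p c ω)) (fun x => U x.1 + U x.2)

lemma BSG {G : Type*} [AddCommGroup G] (h2 : ∀ x : G, x + x = 0) (hp : Pr p)
    (A C : Ω → G) (D : Ω → δ) :
    same p (fun ω => (C ω, D ω)) A ≤
      2 * (HH p (fun ω => (A ω, D ω)) + HH p (fun ω => (A ω + C ω, D ω))) - 3 * HH p D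
      - 2 * HH p (fun ω => (A ω, (C ω, D ω))) + HH p (fun ω => (C ω, D ω)) := by
  set c : Ω → G × δ := fun ω => (C ω, D ω) with hc
  have hP := hp.cc c
  have hneg : ∀ x : G, -x = x := fun x => neg_eq_of_add_eq_zero_left (h2 x)
  have e0 := cc_chain hp c fun x => A x.1 + A x.2
  have sub := HH_submod hP (fun x => A x.1) (fun x => A x.1 + C x.1)
    (fun x => (A x.1 + (A x.2 + C x.2), D x.1))
  have hcc : ∀ x, cc p c x ≠ 0 → C x.2 = C x.1 ∧ D x.2 = D x.1 := by
    intro x hx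
    have := cc_ne_zero hx
    simpa [hc] using this
  -- the total
  have t1 : HH (cc p c) (fun x => (A x.1, A x.1 + C x.1, (A x.1 + (A x.2 + C x.2), D x.1)))
      = HH (cc p c) (fun x => ((A x.1, A x.2), c x.1)) := by
    refine HH_congr hP _ _ fun x y hx hy => ?_
    obtain ⟨a1, a2⟩ := hcc x hx
    obtain ⟨b1, b2⟩ := hcc y hy
    simp only [Prod.mk.injEq, hc, a1, b1]
    constructor
    · rintro ⟨u, v, w, t⟩
      rw [u] at v w
      have v' := add_left_cancel v
      rw [v'] at w
      exact ⟨⟨u, add_right_cancel (add_left_cancel w)⟩, v', t⟩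
    · rintro ⟨⟨u, v⟩, w, t⟩
      rw [u, v, w, t]; simp
  have t2 : HH (cc p c) (fun x => (A x.1, (A x.1 + (A x.2 + C x.2), D x.1)))
      ≤ HH p (fun ω => (A ω, D ω)) + HH p (fun ω => (A ω + C ω, D ω)) - HH p D := by
    have s := HH_submod hP (fun x => A x.1) (fun x => A x.2 + C x.2) (fun x => D x.1)
    have k1 : HH (cc p c) (fun x => (A x.1, (A x.1 + (A x.2 + C x.2), D x.1))) =
        HH (cc p c) (fun x => (A x.1, A x.2 + C x.2, D x.1)) := by
      refine HH_congr' _ _ fun x y => ?_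
      simp only [Prod.mk.injEq]
      constructor
      · rintro ⟨u, v, w⟩
        rw [u] at v
        exact ⟨u, add_left_cancel v, w⟩
      · rintro ⟨u, v, w⟩
        rw [u, v, w]; simp
    have k2 := (cc_fst hp c).HH D
    have k3 := (cc_fst hp c).HH fun ω => (A ω, D ω)
    have k4 : HH (cc p c) (fun x => (A x.2 + C x.2, D x.1)) =
        HH p (fun ω => (A ω + C ω, D ω)) := by
      rw [← (cc_snd hp c).HH fun ω => (A ω + C ω, D ω)]
      refine HH_congr hP _ _ fun x y hx hy => ?_
      rw [(hcc x hx).2, (hcc y hy).2]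
    linarith
  have t3 : HH (cc p c) (fun x => (A x.1 + C x.1, (A x.1 + (A x.2 + C x.2), D x.1)))
      ≤ HH p (fun ω => (A ω, D ω)) + HH p (fun ω => (A ω + C ω, D ω)) - HH p D := by
    have s := HH_submod hP (fun x => A x.2) (fun x => A x.1 + C x.1) (fun x => D x.1)
    have k1 : HH (cc p c) (fun x => (A x.1 + C x.1, (A x.1 + (A x.2 + C x.2), D x.1))) =
        HH (cc p c) (fun x => (A x.2, A x.1 + C x.1, D x.1)) := by
      refine HH_congr hP _ _ fun x y hx hy => ?_
      rw [(hcc x hx).1, (hcc y hy).1]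
      have r : ∀ a b d : G, a + (b + d) = b + (a + d) := fun a b d => by abel
      rw [r (A x.1), r (A y.1)]
      simp only [Prod.mk.injEq]
      constructor
      · rintro ⟨u, v, w⟩
        rw [u] at v
        exact ⟨add_right_cancel v, u, w⟩
      · rintro ⟨u, v, w⟩
        rw [u, v, w]; simp
    have k2 := (cc_fst hp c).HH D
    have k3 := (cc_fst hp c).HH fun ω => (A ω + C ω, D ω)
    have k4 : HH (cc p c) (fun x => (A x.2, D x.1)) = HH p (fun ω => (A ω, D ω)) := by
      rw [← (cc_snd hp c).HH fun ω => (A ω, D ω)]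
      refine HH_congr hP _ _ fun x y hx hy => ?_
      rw [(hcc x hx).2, (hcc y hy).2]
    linarith
  have t4 := cc_HH hp c A A
  have t5 : HH (cc p c) (fun x => (A x.1 + A x.2, c x.1)) + HH p D
      ≤ HH (cc p c) (fun x => (A x.1 + (A x.2 + C x.2), D x.1)) + HH p c := by
    have s := HH_submod hP (fun x => A x.1 + (A x.2 + C x.2)) (fun x => C x.1) (fun x => D x.1)
    have k1 : HH (cc p c) (fun x => (A x.1 + A x.2, c x.1)) =
        HH (cc p c) (fun x => (A x.1 + (A x.2 + C x.2), C x.1, D x.1)) := by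
      refine HH_congr hP _ _ fun x y hx hy => ?_
      rw [(hcc x hx).1, (hcc y hy).1]
      simp only [Prod.mk.injEq, hc, ← add_assoc]
      constructor
      · rintro ⟨u, v, w⟩
        rw [u, v, w]; simp
      · rintro ⟨u, v, w⟩
        rw [v] at u
        exact ⟨add_right_cancel u, v, w⟩
    have k2 := (cc_fst hp c).HH D
    have k3 := (cc_fst hp c).HH c
    have k4 : (fun x : Ω × Ω => (C x.1, D x.1)) = fun x => c x.1 := rfl
    rw [k4] at s
    linarith
  unfold same
  rw [← e0]
  linarith

end copies
end PF

namespace PF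

section push
variable {Ω Ω' Ω₁ Ω₂ α β γ δ : Type*} [Fintype Ω] [Fintype Ω'] [Fintype Ω₁] [Fintype Ω₂]

lemma push_equiv {p : Ω → ℝ} {q : Ω' → ℝ} (e : Ω' ≃ Ω) (h : ∀ ω, q ω = p (e ω)) : Push e q p := by
  intro g
  exact Fintype.sum_equiv e _ _ fun x => by rw [h]

lemma Push.prod {p : Ω → ℝ} {q : Ω' → ℝ} {p₁ : Ω₁ → ℝ} {p₂ : Ω₂ → ℝ} {φ : Ω₁ → Ω} {ψ : Ω₂ → Ω'}
    (h : Push φ p₁ p) (h' : Push ψ p₂ q) :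
    Push (fun x : Ω₁ × Ω₂ => (φ x.1, ψ x.2)) (pd p₁ p₂) (pd p q) := by
  intro g
  have h1 := sum_pd p₁ p₂ fun a b => g (φ a, ψ b)
  have h2 := sum_pd p q fun a b => g (a, b)
  refine h1.trans (Eq.trans ?_ h2.symm)
  rw [← h]
  refine Finset.sum_congr rfl fun a _ => ?_
  rw [h' fun b => g (φ a, b)]

lemma same_congr [Add γ] (p : Ω → ℝ) (c : Ω → α) (c' : Ω → β) (U : Ω → γ)
    (h : ∀ ω ω', c ω = c ω' ↔ c' ω = c' ω') : same p c U = same p c' U := by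
  have : cnd p c = cnd p c' := by
    funext a b
    unfold cnd mm
    simp_rw [fun a b => ind_congr (h a b)]
  unfold same
  rw [this]

lemma push_swap (p : Ω → ℝ) (q : Ω' → ℝ) :
    Push (fun x : Ω × Ω' => (x.2, x.1)) (pd p q) (pd q p) :=
  push_equiv (Equiv.prodComm _ _) fun ω => by simp [pd]; ring

lemma push_assoc (p : Ω → ℝ) (q : Ω' → ℝ) (r : Ω₁ → ℝ) :
    Push (fun x : (Ω × Ω') × Ω₁ => (x.1.1, (x.1.2, x.2))) (pd (pd p q) r) (pd p (pd q r)) :=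
  push_equiv (Equiv.prodAssoc _ _ _) fun ω => by simp [pd]; ring

lemma push_assoc' (p : Ω → ℝ) (q : Ω' → ℝ) (r : Ω₁ → ℝ) :
    Push (fun x : Ω × (Ω' × Ω₁) => ((x.1, x.2.1), x.2.2)) (pd p (pd q r)) (pd (pd p q) r) :=
  push_equiv (Equiv.prodAssoc _ _ _).symm fun ω => by simp [pd]; ring

lemma push_cc (p : Ω → ℝ) (q : Ω' → ℝ) (p₁ : Ω₁ → ℝ) (p₂ : Ω₂ → ℝ) :
    Push (fun x : (Ω × Ω') × (Ω₁ × Ω₂) => ((x.1.1, x.2.1), (x.1.2, x.2.2)))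
      (pd (pd p q) (pd p₁ p₂)) (pd (pd p p₁) (pd q p₂)) :=
  push_equiv (Equiv.prodProdProdComm Ω Ω' Ω₁ Ω₂) fun ω => by simp [pd]; ring

lemma push_cc' (p : Ω → ℝ) (q : Ω' → ℝ) (p₁ : Ω₁ → ℝ) (p₂ : Ω₂ → ℝ) :
    Push (fun x : (Ω × Ω') × (Ω₁ × Ω₂) => ((x.1.2, x.2.1), (x.1.1, x.2.2)))
      (pd (pd p q) (pd p₁ p₂)) (pd (pd q p₁) (pd p p₂)) :=
  push_equiv (((Equiv.prodComm Ω Ω').prodCongr (Equiv.refl _)).trans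
    (Equiv.prodProdProdComm Ω' Ω Ω₁ Ω₂)) fun ω => by simp [pd]; ring

lemma KV_raw {G : Type*} [AddCommGroup G] {p : Ω → ℝ} {q : Ω' → ℝ} {r : Ω₁ → ℝ}
    (hp : Pr p) (hq : Pr q) (hr : Pr r) (S : Ω → G) (T : Ω' → G) (R : Ω₁ → G)
    (BS : Ω → α) (BT : Ω' → β) (BR : Ω₁ → γ) :
    HH p (fun ω => (S ω, BS ω)) + HH q (fun ω => (T ω, BT ω)) + HH r (fun ω => (R ω, BR ω))
    + HH (pd (pd p q) r) (fun x => (S x.1.1 + T x.1.2 + R x.2, ((BS x.1.1, BT x.1.2), BR x.2)))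
    ≤ (HH p (fun ω => (S ω, BS ω)) + HH (pd q r) (fun x => (T x.1 + R x.2, (BT x.1, BR x.2))))
    + (HH (pd p q) (fun x => (S x.1 + T x.2, (BS x.1, BT x.2))) + HH r (fun ω => (R ω, BR ω))) := by
  have s := HH_submod ((hp.pd hq).pd hr) (fun x => S x.1.1) (fun x => R x.2)
    (fun x => (S x.1.1 + T x.1.2 + R x.2, ((BS x.1.1, BT x.1.2), BR x.2)))
  have k1 : HH (pd (pd p q) r) (fun x => (S x.1.1, R x.2,
      (S x.1.1 + T x.1.2 + R x.2, ((BS x.1.1, BT x.1.2), BR x.2)))) =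
      HH p (fun ω => (S ω, BS ω)) + HH q (fun ω => (T ω, BT ω)) +
        HH r (fun ω => (R ω, BR ω)) := by
    rw [← HH_pd hp hq, ← HH_pd (hp.pd hq) hr]
    refine HH_congr' _ _ fun x y => ?_
    simp only [Prod.mk.injEq]
    constructor
    · rintro ⟨u, v, w, ⟨t, t'⟩, t''⟩
      rw [u, v] at w
      exact ⟨⟨⟨u, t⟩, add_left_cancel (add_right_cancel w), t'⟩, v, t''⟩
    · rintro ⟨⟨⟨u, t⟩, w, t'⟩, v, t''⟩
      rw [u, v, w]; exact ⟨rfl, rfl, rfl, ⟨t, t'⟩, t''⟩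
  have k2 : HH (pd (pd p q) r) (fun x => (R x.2,
      (S x.1.1 + T x.1.2 + R x.2, ((BS x.1.1, BT x.1.2), BR x.2)))) =
      HH (pd p q) (fun x => (S x.1 + T x.2, (BS x.1, BT x.2))) +
        HH r (fun ω => (R ω, BR ω)) := by
    rw [← HH_pd (hp.pd hq) hr]
    refine HH_congr' _ _ fun x y => ?_
    simp only [Prod.mk.injEq]
    constructor
    · rintro ⟨v, w, t, t''⟩
      rw [v] at w
      exact ⟨⟨add_right_cancel w, t⟩, v, t''⟩
    · rintro ⟨⟨w, t⟩, v, t''⟩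
      rw [v, w]; exact ⟨rfl, rfl, t, t''⟩
  have k3 : HH (pd (pd p q) r) (fun x => (S x.1.1,
      (S x.1.1 + T x.1.2 + R x.2, ((BS x.1.1, BT x.1.2), BR x.2)))) =
      HH p (fun ω => (S ω, BS ω)) +
        HH (pd q r) (fun x => (T x.1 + R x.2, (BT x.1, BR x.2))) := by
    rw [← HH_pd hp (hq.pd hr), ← (push_assoc p q r).HH]
    refine HH_congr' _ _ fun x y => ?_
    simp only [Prod.mk.injEq, add_assoc]
    constructor
    · rintro ⟨v, w, ⟨t, t'⟩, t''⟩
      rw [v] at w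
      exact ⟨⟨v, t⟩, add_left_cancel w, t', t''⟩
    · rintro ⟨⟨v, t⟩, w, t', t''⟩
      rw [v, w]; exact ⟨rfl, rfl, ⟨t, t'⟩, t''⟩
  rw [k1, k2, k3] at s
  exact s

/-- raw form of the fibring identities: `P` is the fourfold product -/
lemma fib_raw {G : Type*} [AddCommGroup G] (h2 : ∀ x : G, x + x = 0) {p : Ω → ℝ}
    (hp : Pr p) (Z : Ω → G) (B : Ω → β) :
    let P := pd (pd p p) (pd p p)
    let A := fun x : (Ω × Ω) × (Ω × Ω) => Z x.1.1 + Z x.2.1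
    let BQ := fun x : (Ω × Ω) × (Ω × Ω) => (((B x.1.1, B x.1.2), Z x.1.1 + Z x.1.2),
      ((B x.2.1, B x.2.2), Z x.2.1 + Z x.2.2))
    let E2 := HH (pd p p) (fun x => (Z x.1 + Z x.2, (B x.1, B x.2)))
    let E4 := HH P (fun x => (Z x.1.1 + Z x.1.2 + (Z x.2.1 + Z x.2.2),
      ((B x.1.1, B x.1.2), (B x.2.1, B x.2.2))))
    HH P BQ = 2 * E2 ∧ HH P (fun x => (A x, BQ x)) + E4 ≤ 4 * E2 ∧
    same P BQ A ≤ 10 * E2 - 3 * E4 - 2 * HH P (fun x => (A x, BQ x)) := by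
  intro P A BQ E2 E4
  have hP : Pr P := (hp.pd hp).pd (hp.pd hp)
  let C : (Ω × Ω) × (Ω × Ω) → G := fun x => Z x.1.1 + Z x.1.2
  let D : (Ω × Ω) × (Ω × Ω) → G × (β × β) × (β × β) := fun x =>
    (Z x.1.1 + Z x.1.2 + (Z x.2.1 + Z x.2.2), ((B x.1.1, B x.1.2), (B x.2.1, B x.2.2)))
  have hpd : HH P (fun x => ((Z x.1.1 + Z x.1.2, (B x.1.1, B x.1.2)),
      (Z x.2.1 + Z x.2.2, (B x.2.1, B x.2.2)))) = 2 * E2 := by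
    rw [two_mul]
    exact HH_pd (hp.pd hp) (hp.pd hp) (fun x => (Z x.1 + Z x.2, (B x.1, B x.2)))
      (fun x => (Z x.1 + Z x.2, (B x.1, B x.2)))
  have hC : HH P (fun ω => (C ω, D ω)) = 2 * E2 := by
    rw [← hpd]
    refine HH_congr' _ _ fun x y => ?_
    simp only [C, D, Prod.mk.injEq]
    constructor
    · rintro ⟨u, v, w, t⟩
      rw [u] at v
      exact ⟨⟨u, w⟩, add_left_cancel v, t⟩
    · rintro ⟨⟨u, w⟩, v, t⟩
      rw [u, v]; exact ⟨rfl, rfl, w, t⟩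
  have hA : HH P (fun ω => (A ω, D ω)) = 2 * E2 := by
    rw [← hpd]
    refine Eq.trans ?_ ((push_cc p p p p).HH _)
    refine HH_congr' _ _ fun x y => ?_
    simp only [A, D, Prod.mk.injEq]
    have r : ∀ a b c d : G, a + b + (c + d) = (a + c) + (b + d) := fun a b c d => by abel
    rw [r _ _ (Z x.2.1), r _ _ (Z y.2.1)]
    constructor
    · rintro ⟨u, v, w, t⟩
      rw [u] at v
      exact ⟨⟨u, w.1, t.1⟩, add_left_cancel v, w.2, t.2⟩
    · rintro ⟨⟨u, w⟩, v, t⟩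
      rw [u, v]; exact ⟨rfl, rfl, ⟨w.1, t.1⟩, w.2, t.2⟩
  have hAC : HH P (fun ω => (A ω + C ω, D ω)) = 2 * E2 := by
    rw [← hpd]
    refine Eq.trans ?_ ((push_cc' p p p p).HH _)
    refine HH_congr' _ _ fun x y => ?_
    simp only [A, C, D, Prod.mk.injEq]
    have r : ∀ a b c d : G, a + b + (c + d) = (b + c) + (a + d) := fun a b c d => by abel
    have r' : ∀ a c b : G, a + c + (a + b) = b + c := fun a b c => by
      have : a + b + (a + c) = (a + a) + (b + c) := by abel
      rw [this, h2, zero_add, add_comm]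
    rw [r _ _ (Z x.2.1), r _ _ (Z y.2.1), r', r']
    constructor
    · rintro ⟨u, v, w, t⟩
      rw [u] at v
      exact ⟨⟨u, w.2, t.1⟩, add_left_cancel v, w.1, t.2⟩
    · rintro ⟨⟨u, w⟩, v, t⟩
      rw [u, v]; exact ⟨rfl, rfl, ⟨t.1, w.1⟩, w.2, t.2⟩
  have kB : ∀ x y, BQ x = BQ y ↔ (C x, D x) = (C y, D y) := by
    intro x y
    simp only [C, D, BQ, Prod.mk.injEq]
    constructor
    · rintro ⟨⟨u, v⟩, w, t⟩
      rw [v, t]; exact ⟨rfl, rfl, u, w⟩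
    · rintro ⟨v, t, u, w⟩
      rw [v] at t
      exact ⟨⟨u, v⟩, w, add_left_cancel t⟩
  have hBQ : HH P BQ = HH P (fun ω => (C ω, D ω)) := HH_congr' _ _ kB
  have hACD : HH P (fun ω => (A ω, (C ω, D ω))) = HH P (fun x => (A x, BQ x)) := by
    refine HH_congr' _ _ fun x y => ?_
    exact ⟨fun e => Prod.ext (Prod.mk.inj e).1 ((kB x y).2 (Prod.mk.inj e).2),
      fun e => Prod.ext (Prod.mk.inj e).1 ((kB x y).1 (Prod.mk.inj e).2)⟩
  have sub := HH_submod hP A C D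
  have bsg := BSG h2 hP A C D
  rw [← same_congr P BQ (fun ω => (C ω, D ω)) A kB] at bsg
  have hD : HH P D = E4 := rfl
  refine ⟨hBQ.trans hC, ?_, ?_⟩ <;> linarith

end push

structure Ker (G : Type) where
  Ω : Type
  [ft : Fintype Ω]
  p : Ω → ℝ
  hp : Pr p
  β : Type
  B : Ω → β
  Z : Ω → G

attribute [instance] Ker.ft

namespace Ker
variable {G G' : Type}

def h (T : Ker G) : ℝ := HH T.p (fun ω => (T.Z ω, T.B ω)) - HH T.p T.B

def add [Add G] (S T : Ker G) : Ker G where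
  Ω := S.Ω × T.Ω
  p := pd S.p T.p
  hp := S.hp.pd T.hp
  β := S.β × T.β
  B := fun x => (S.B x.1, T.B x.2)
  Z := fun x => S.Z x.1 + T.Z x.2

def dbl [Add G] (T : Ker G) : Ker G := add T T

def fib [Add G] (T : Ker G) : Ker G where
  Ω := T.Ω × T.Ω
  p := pd T.p T.p
  hp := T.hp.pd T.hp
  β := (T.β × T.β) × G
  B := fun x => ((T.B x.1, T.B x.2), T.Z x.1 + T.Z x.2)
  Z := fun x => T.Z x.1

def map (ρ : G → G') (T : Ker G) : Ker G' where
  Ω := T.Ω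
  p := T.p
  hp := T.hp
  β := T.β
  B := T.B
  Z := fun x => ρ (T.Z x)

def ofLaw [Fintype G] (z : G → ℝ) (hz : Pr z) : Ker G where
  Ω := G
  p := z
  hp := hz
  β := Unit
  B := fun _ => ()
  Z := fun x => x

lemma h_nonneg (T : Ker G) : 0 ≤ T.h :=
  sub_nonneg.2 (HH_mono T.hp _ _ fun _ _ _ _ h => (Prod.mk.inj h).2)

/-- fibre law -/
def z (T : Ker G) (ω : T.Ω) : G → ℝ := law (cnd T.p T.B ω) T.Z

lemma z_pr [Fintype G] (T : Ker G) {ω : T.Ω} (h : T.p ω ≠ 0) : Pr (T.z ω) :=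
  (T.hp.cnd T.B h).law T.Z

lemma h_eq [Fintype G] (T : Ker G) : T.h = ∑ ω, T.p ω * HH (T.z ω) id := by
  unfold h
  rw [HH_chain T.hp]
  refine Finset.sum_congr rfl fun ω _ => ?_
  unfold z
  rw [← (push_law (cnd T.p T.B ω) T.Z).HH id]; rfl

lemma h_le_log [Fintype G] (T : Ker G) : T.h ≤ Real.log (Fintype.card G) := by
  rw [h_eq]
  calc _ ≤ ∑ ω, T.p ω * Real.log (Fintype.card G) := by
        refine Finset.sum_le_sum fun ω _ => ?_
        by_cases h0 : T.p ω = 0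
        · simp [h0]
        exact mul_le_mul_of_nonneg_left
          (HH_le_log (T.z_pr h0) id Finset.univ (fun _ _ => Finset.mem_univ _)) (T.hp.1 _)
    _ = _ := by rw [← Finset.sum_mul, T.hp.2, one_mul]

lemma h_add_eq [Fintype G] [Add G] (S T : Ker G) :
    (add S T).h = ∑ a, S.p a * ∑ b, T.p b * HH (pd (S.z a) (T.z b)) (fun x => x.1 + x.2) := by
  unfold h
  rw [HH_chain (add S T).hp]
  rw [← sum_pd S.p T.p fun a b => HH (pd (S.z a) (T.z b)) (fun x => x.1 + x.2)]
  refine Finset.sum_congr rfl fun x _ => ?_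
  have e : cnd (add S T).p (add S T).B x = pd (cnd S.p S.B x.1) (cnd T.p T.B x.2) :=
    cnd_pd S.B T.B x
  rw [e]
  have := ((push_law (cnd S.p S.B x.1) S.Z).prod (push_law (cnd T.p T.B x.2) T.Z)).HH
    fun x => x.1 + x.2
  unfold z
  rw [← this]; rfl

lemma same_eq [Fintype G] [Add G] (T : Ker G) :
    same T.p T.B T.Z = ∑ a, T.p a * HH (pd (T.z a) (T.z a)) (fun x => x.1 + x.2) := by
  unfold same
  refine Finset.sum_congr rfl fun x _ => ?_
  have := ((push_law (cnd T.p T.B x) T.Z).prod (push_law (cnd T.p T.B x) T.Z)).HH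
    fun x => x.1 + x.2
  unfold z
  rw [← this]

lemma z_ofLaw [Fintype G] (z : G → ℝ) (hz : Pr z) (ω : (ofLaw z hz).Ω) :
    (ofLaw z hz).z ω = z := by
  change G at ω
  have e : cnd z (fun _ : G => ()) ω = z := by
    funext a
    simp [cnd, mm, ind, hz.2]
  funext a
  show law (cnd z (fun _ : G => ()) ω) (fun x => x) a = z a
  rw [e]
  unfold law
  rw [Finset.sum_eq_single a]
  · simp [ind]
  · intro b _ hb; simp [ind, hb]
  · simp

lemma h_ofLaw [Fintype G] (z : G → ℝ) (hz : Pr z) : (ofLaw z hz).h = HH z id := by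
  rw [h_eq]
  simp_rw [z_ofLaw]
  rw [← Finset.sum_mul]
  exact (congrArg (· * _) hz.2).trans (one_mul _)

lemma h_add_ofLaw [Fintype G] [Add G] (z : G → ℝ) (hz : Pr z) (T : Ker G) :
    (add (ofLaw z hz) T).h = ∑ b, T.p b * HH (pd z (T.z b)) (fun x => x.1 + x.2) := by
  rw [h_add_eq]
  simp_rw [z_ofLaw]
  rw [← Finset.sum_mul]
  exact (congrArg (· * _) hz.2).trans (one_mul _)

lemma h_add_ofLaw₂ [Fintype G] [Add G] (z w : G → ℝ) (hz : Pr z) (hw : Pr w) :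
    (add (ofLaw z hz) (ofLaw w hw)).h = HH (pd z w) (fun x => x.1 + x.2) := by
  rw [h_add_ofLaw]
  simp_rw [z_ofLaw]
  rw [← Finset.sum_mul]
  exact (congrArg (· * _) hw.2).trans (one_mul _)

/-- refinement -/
def Ref (T' T : Ker G) : Prop := ∃ φ : T'.Ω → T.Ω, Push φ T'.p T.p ∧ (∀ ω, T'.Z ω = T.Z (φ ω)) ∧
  ∀ ω ω', T'.B ω = T'.B ω' → T.B (φ ω) = T.B (φ ω')

lemma Ref.refl (T : Ker G) : Ref T T := ⟨id, fun _ => rfl, fun _ => rfl, fun _ _ h => h⟩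

lemma Ref.trans {T₁ T₂ T₃ : Ker G} (h : Ref T₁ T₂) (h' : Ref T₂ T₃) : Ref T₁ T₃ := by
  obtain ⟨φ, a, b, c⟩ := h
  obtain ⟨φ', a', b', c'⟩ := h'
  refine ⟨fun x => φ' (φ x), fun g => ?_, fun ω => by rw [b, b'], fun ω ω' e => c' _ _ (c _ _ e)⟩
  rw [← a' g, ← a fun x => g (φ' x)]

lemma Ref.h_sub_le {T' T : Ker G} (r : Ref T' T) (ρ : G → G') :
    T'.h - (map ρ T').h ≤ T.h - (map ρ T).h := by
  obtain ⟨φ, a, b, c⟩ := r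
  have s := HH_submod T'.hp (fun ω => T.Z (φ ω)) T'.B (fun ω => (ρ (T.Z (φ ω)), T.B (φ ω)))
  have k1 := a.HH fun ω => (ρ (T.Z ω), T.B ω)
  have k2 := a.HH fun ω => (T.Z ω, T.B ω)
  have k3 : HH T'.p (fun ω => (T.Z (φ ω), T'.B ω, (ρ (T.Z (φ ω)), T.B (φ ω)))) =
      HH T'.p (fun ω => (T'.Z ω, T'.B ω)) := by
    refine HH_congr' _ _ fun x y => ?_
    simp only [Prod.mk.injEq, b]
    exact ⟨fun h => ⟨h.1, h.2.1⟩, fun h => ⟨h.1, h.2, by rw [h.1], c _ _ h.2⟩⟩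
  have k4 : HH T'.p (fun ω => (T'.B ω, (ρ (T.Z (φ ω)), T.B (φ ω)))) =
      HH T'.p (fun ω => (ρ (T'.Z ω), T'.B ω)) := by
    refine HH_congr' _ _ fun x y => ?_
    simp only [Prod.mk.injEq, b]
    exact ⟨fun h => ⟨h.2.1, h.1⟩, fun h => ⟨h.2, h.1, c _ _ h.2⟩⟩
  have k5 : HH T'.p (fun ω => (T.Z (φ ω), (ρ (T.Z (φ ω)), T.B (φ ω)))) =
      HH T'.p (fun ω => (T.Z (φ ω), T.B (φ ω))) := by
    refine HH_congr' _ _ fun x y => ?_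
    simp only [Prod.mk.injEq]
    exact ⟨fun h => ⟨h.1, h.2.2⟩, fun h => ⟨h.1, by rw [h.1], h.2⟩⟩
  have e : ∀ T : Ker G, (map ρ T).h =
    HH T.p (fun ω => (ρ (T.Z ω), T.B ω)) - HH T.p T.B := fun T => rfl
  rw [e, e]
  unfold h
  linarith

lemma h_map_const (T : Ker G) : (map (fun _ => ()) T).h = 0 := by
  unfold h map
  simp only
  rw [sub_eq_zero]
  exact HH_congr' _ _ fun x y => by simp

lemma Ref.h_le {T' T : Ker G} (r : Ref T' T) : T'.h ≤ T.h := by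
  have := r.h_sub_le (fun _ => ())
  rw [h_map_const, h_map_const] at this
  linarith

lemma h_map_le (ρ : G → G') (T : Ker G) : (map ρ T).h ≤ T.h := by
  unfold h map
  have := HH_mono T.hp (fun ω => (ρ (T.Z ω), T.B ω)) (fun ω => (T.Z ω, T.B ω))
    (fun x y _ _ h => by
      simp only [Prod.mk.injEq] at h ⊢
      exact ⟨by rw [h.1], h.2⟩)
  simp only
  linarith

lemma Ref.map {T' T : Ker G} (r : Ref T' T) (ρ : G → G') : Ref (map ρ T') (map ρ T) := by
  obtain ⟨φ, a, b, c⟩ := r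
  exact ⟨φ, a, fun ω => congrArg ρ (b ω), c⟩

section
variable [AddCommGroup G]

lemma Ref.add {S' S T' T : Ker G} (r : Ref S' S) (s : Ref T' T) :
    Ref (add S' T') (add S T) := by
  obtain ⟨φ, a, b, c⟩ := r
  obtain ⟨φ', a', b', c'⟩ := s
  refine ⟨fun x => (φ x.1, φ' x.2), a.prod a', fun ω => ?_, fun ω ω' e => ?_⟩
  · show S'.Z _ + T'.Z _ = S.Z _ + T.Z _
    rw [b, b']
  · have e := Prod.mk.inj e
    exact Prod.ext (c _ _ e.1) (c' _ _ e.2)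

lemma Ref.dbl {T' T : Ker G} (r : Ref T' T) : Ref T'.dbl T.dbl := r.add r

lemma ref_fib (T : Ker G) : Ref T.fib T :=
  ⟨Prod.fst, push_fst T.hp, fun _ => rfl, fun ω ω' e => by
    simp only [fib, Prod.mk.injEq] at e; exact e.1.1⟩

lemma add_comm_h (S T : Ker G) : (add S T).h = (add T S).h := by
  have : ∀ S T : Ker G, Ref (Ker.add S T) (Ker.add T S) := fun S T =>
    ⟨fun x => (x.2, x.1), push_swap _ _, fun ω => add_comm _ _, fun ω ω' e =>
      Prod.ext (Prod.mk.inj e).2 (Prod.mk.inj e).1⟩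
  exact le_antisymm (this S T).h_le (this T S).h_le

lemma add_assoc_h (S T R : Ker G) : (add (add S T) R).h = (add S (add T R)).h := by
  have r1 : Ref (Ker.add (Ker.add S T) R) (Ker.add S (Ker.add T R)) :=
    ⟨fun x => (x.1.1, (x.1.2, x.2)), push_assoc _ _ _, fun ω => add_assoc _ _ _, fun ω ω' e =>
      Prod.ext (Prod.mk.inj (Prod.mk.inj e).1).1
        (Prod.ext (Prod.mk.inj (Prod.mk.inj e).1).2 (Prod.mk.inj e).2)⟩
  have r2 : Ref (Ker.add S (Ker.add T R)) (Ker.add (Ker.add S T) R) :=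
    ⟨fun x => ((x.1, x.2.1), x.2.2), push_assoc' _ _ _, fun ω => (add_assoc _ _ _).symm,
      fun ω ω' e => Prod.ext (Prod.ext (Prod.mk.inj e).1 (Prod.mk.inj (Prod.mk.inj e).2).1)
        (Prod.mk.inj (Prod.mk.inj e).2).2⟩
  exact le_antisymm r1.h_le r2.h_le

lemma HB_add (S T : Ker G) : HH (add S T).p (add S T).B = HH S.p S.B + HH T.p T.B :=
  HH_pd S.hp T.hp S.B T.B

lemma h_le_add (S T : Ker G) : S.h ≤ (add S T).h := by
  have s := HH_submod (Ker.add S T).hp (Ker.add S T).Z (fun x => T.Z x.2) (Ker.add S T).B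
  have b := HB_add S T
  have k1 : HH (Ker.add S T).p (fun x => ((Ker.add S T).Z x, T.Z x.2, (Ker.add S T).B x)) =
      HH S.p (fun ω => (S.Z ω, S.B ω)) + HH T.p (fun ω => (T.Z ω, T.B ω)) := by
    rw [← HH_pd S.hp T.hp]
    refine HH_congr' _ _ fun x y => ?_
    simp only [Ker.add, Prod.mk.injEq]
    constructor
    · rintro ⟨u, v, w⟩
      rw [v] at u
      exact ⟨⟨add_right_cancel u, w.1⟩, v, w.2⟩
    · rintro ⟨⟨u, v⟩, w, t⟩
      rw [u, w]; exact ⟨rfl, rfl, v, t⟩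
  have k2 : HH (Ker.add S T).p (fun x => (T.Z x.2, (Ker.add S T).B x)) =
      HH S.p S.B + HH T.p (fun ω => (T.Z ω, T.B ω)) := by
    rw [← HH_pd S.hp T.hp]
    refine HH_congr' _ _ fun x y => ?_
    simp only [Ker.add, Prod.mk.injEq]
    tauto
  unfold h
  linarith

lemma add_le (S T : Ker G) : (add S T).h ≤ S.h + T.h := by
  have b := HB_add S T
  have k1 := HH_mono (Ker.add S T).hp (fun x => ((Ker.add S T).Z x, (Ker.add S T).B x))
    (fun x => ((S.Z x.1, S.B x.1), (T.Z x.2, T.B x.2))) (fun x y _ _ => by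
      simp only [Ker.add, Prod.mk.injEq]
      rintro ⟨⟨u, v⟩, w, t⟩
      rw [u, w]; exact ⟨rfl, v, t⟩)
  have k2 := HH_pd S.hp T.hp (fun ω => (S.Z ω, S.B ω)) (fun ω => (T.Z ω, T.B ω))
  unfold h
  have k3 := k1.trans_eq k2
  linarith

/-- Kaimanovich–Vershik / Madiman submodularity -/
lemma KV (S T R : Ker G) : (add (add S T) R).h + T.h ≤ (add S T).h + (add T R).h := by
  have b1 := HB_add (Ker.add S T) R
  have b2 := HB_add S T
  have b3 := HB_add T R
  have k : HH S.p (fun ω => (S.Z ω, S.B ω)) + HH T.p (fun ω => (T.Z ω, T.B ω)) +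
      HH R.p (fun ω => (R.Z ω, R.B ω)) + HH (add (add S T) R).p
        (fun ω => ((add (add S T) R).Z ω, (add (add S T) R).B ω)) ≤
      (HH S.p (fun ω => (S.Z ω, S.B ω)) +
        HH (add T R).p (fun ω => ((add T R).Z ω, (add T R).B ω))) +
      (HH (add S T).p (fun ω => ((add S T).Z ω, (add S T).B ω)) +
        HH R.p (fun ω => (R.Z ω, R.B ω))) :=
    KV_raw S.hp T.hp R.hp S.Z T.Z R.Z S.B T.B R.B
  unfold h
  linarith

lemma add_dbl_le (A T : Ker G) : (add A T.dbl).h ≤ (add A T).h + T.dbl.h - T.h := by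
  have := KV A T T
  unfold Ker.dbl
  rw [← add_assoc_h]
  linarith

lemma dbl_dbl_le (T : Ker G) : T.dbl.dbl.h ≤ 3 * T.dbl.h - 2 * T.h := by
  have h1 := add_dbl_le T.dbl T
  have h2 := add_dbl_le T T
  rw [add_comm_h] at h2
  have e1 : (Ker.add T T) = T.dbl := rfl
  have e2 : T.dbl.dbl = Ker.add T.dbl T.dbl := rfl
  rw [e1] at h2
  rw [e2]
  linarith

lemma h_fib (T : Ker G) : T.fib.h = 2 * T.h - T.dbl.h := by
  have b := HB_add T T
  have k1 : HH T.fib.p (fun x => (T.fib.Z x, T.fib.B x)) =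
      HH T.p (fun ω => (T.Z ω, T.B ω)) + HH T.p (fun ω => (T.Z ω, T.B ω)) := by
    rw [← HH_pd T.hp T.hp]
    refine HH_congr' _ _ fun x y => ?_
    simp only [fib, Prod.mk.injEq]
    constructor
    · rintro ⟨u, ⟨v, w⟩, t⟩
      rw [u] at t
      exact ⟨⟨u, v⟩, add_left_cancel t, w⟩
    · rintro ⟨⟨u, v⟩, w, t⟩
      rw [u, w]; exact ⟨rfl, ⟨v, t⟩, rfl⟩
  have k2 : HH T.fib.p T.fib.B = HH T.dbl.p (fun x => (T.dbl.Z x, T.dbl.B x)) := by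
    refine HH_congr' _ _ fun x y => ?_
    simp only [fib, dbl, Ker.add, Prod.mk.injEq]
    tauto
  unfold h
  rw [k1, k2]
  unfold dbl
  linarith

/-- the fibring defect -/
def I (T : Ker G) : ℝ := 2 * T.dbl.h - T.dbl.dbl.h - T.fib.dbl.h

lemma fibring (h2 : ∀ x : G, x + x = 0) (T : Ker G) :
    0 ≤ T.I ∧ same T.fib.dbl.p T.fib.dbl.B T.fib.dbl.Z ≤ T.fib.dbl.h + 3 * T.I := by
  have bb : HH T.dbl.p T.dbl.B = _ := HB_add T T
  have bd : HH T.dbl.dbl.p T.dbl.dbl.B = _ := HB_add T.dbl T.dbl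
  obtain ⟨a1, a2, a3⟩ := fib_raw h2 T.hp T.Z T.B
  change HH T.fib.dbl.p T.fib.dbl.B =
    2 * HH T.dbl.p (fun x => (T.dbl.Z x, T.dbl.B x)) at a1
  change HH T.fib.dbl.p (fun x => (T.fib.dbl.Z x, T.fib.dbl.B x)) +
    HH T.dbl.dbl.p (fun x => (T.dbl.dbl.Z x, T.dbl.dbl.B x)) ≤
    4 * HH T.dbl.p (fun x => (T.dbl.Z x, T.dbl.B x)) at a2
  change same T.fib.dbl.p T.fib.dbl.B T.fib.dbl.Z ≤
    10 * HH T.dbl.p (fun x => (T.dbl.Z x, T.dbl.B x))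
    - 3 * HH T.dbl.dbl.p (fun x => (T.dbl.dbl.Z x, T.dbl.dbl.B x))
    - 2 * HH T.fib.dbl.p (fun x => (T.fib.dbl.Z x, T.fib.dbl.B x)) at a3
  unfold I h
  constructor <;> linarith

end
end Ker
end PF

namespace PF

lemma exists_le_avg {Ω : Type*} [Fintype Ω] {p : Ω → ℝ} (hp : Pr p) (g : Ω → ℝ) (c : ℝ)
    (h : ∑ ω, p ω * g ω ≤ c) : ∃ ω, p ω ≠ 0 ∧ g ω ≤ c := by
  by_contra hcon
  push Not at hcon
  have h1 : ∀ ω, p ω * c ≤ p ω * g ω := fun ω => by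
    by_cases h0 : p ω = 0
    · simp [h0]
    · exact mul_le_mul_of_nonneg_left (hcon ω h0).le (hp.1 ω)
  have h2 : ∃ ω, p ω ≠ 0 := by
    by_contra h3
    push Not at h3
    have := hp.2
    simp [h3] at this
  obtain ⟨ω₀, h0⟩ := h2
  have h3 : p ω₀ * c < p ω₀ * g ω₀ :=
    mul_lt_mul_of_pos_left (hcon ω₀ h0) (lt_of_le_of_ne (hp.1 ω₀) (Ne.symm h0))
  have := Finset.sum_lt_sum (fun i (_ : i ∈ Finset.univ) => h1 i) ⟨ω₀, Finset.mem_univ _, h3⟩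
  rw [← Finset.sum_mul, hp.2] at this
  linarith

variable {G : Type} [AddCommGroup G] [Fintype G]

def Hc (z w : G → ℝ) : ℝ := HH (pd z w) (fun x => x.1 + x.2)

lemma Hc_ker (z w : G → ℝ) (hz : Pr z) (hw : Pr w) :
    Hc z w = (Ker.add (Ker.ofLaw z hz) (Ker.ofLaw w hw)).h :=
  (Ker.h_add_ofLaw₂ z w hz hw).symm

lemma le_Hc {z w : G → ℝ} (hz : Pr z) (hw : Pr w) : HH z id ≤ Hc z w := by
  rw [Hc_ker z w hz hw, ← Ker.h_ofLaw z hz]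
  exact Ker.h_le_add _ _

lemma le_Hc' {z w : G → ℝ} (hz : Pr z) (hw : Pr w) : HH w id ≤ Hc z w := by
  rw [Hc_ker z w hz hw, ← Ker.h_ofLaw w hw, Ker.add_comm_h]
  exact Ker.h_le_add _ _

def FF (A T : Ker G) : ℝ := T.dbl.h - 17 / 16 * T.h + 1 / 8 * (Ker.add A T).h

lemma FF_ge (A T : Ker G) : -(17 / 16 * Real.log (Fintype.card G)) ≤ FF A T := by
  have h1 := T.h_le_log
  have h2 := T.dbl.h_nonneg
  have h3 := (Ker.add A T).h_nonneg
  unfold FF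
  linarith

lemma FF_fib (A T : Ker G) : ∑ ω, T.p ω * (Hc (T.z ω) (T.z ω) - 17 / 16 * HH (T.z ω) id
    + 1 / 8 * ∑ a, A.p a * Hc (A.z a) (T.z ω)) =
    same T.p T.B T.Z - 17 / 16 * T.h + 1 / 8 * (Ker.add A T).h := by
  rw [T.same_eq, T.h_eq, Ker.h_add_eq]
  simp only [Finset.mul_sum, mul_add, mul_sub, Finset.sum_add_distrib, Finset.sum_sub_distrib]
  congr 1
  · congr 1
    refine Finset.sum_congr rfl fun _ _ => ?_
    ring
  · rw [Finset.sum_comm]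
    refine Finset.sum_congr rfl fun _ _ => Finset.sum_congr rfl fun _ _ => ?_
    simp only [Hc]; ring

lemma near_min (h2 : ∀ x : G, x + x = 0) (a : G → ℝ) (ha : Pr a) (m ξ : ℝ)
    (hm : ∀ S, m ≤ FF (Ker.ofLaw a ha) S) (T : Ker G) (hT : FF (Ker.ofLaw a ha) T ≤ m + ξ) :
    T.dbl.h - T.h ≤ 17 * ξ := by
  set A := Ker.ofLaw a ha with hA
  obtain ⟨i1, i2⟩ := Ker.fibring h2 T
  have hI : T.I = 2 * T.dbl.h - T.dbl.dbl.h - T.fib.dbl.h := rfl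
  have m1 := hm T.dbl
  have m2 := hm T.fib
  have e1 := Ker.add_dbl_le A T
  have e2 := (Ker.Ref.add (Ker.Ref.refl A) (Ker.ref_fib T)).h_le
  have e3 := (Ker.Ref.add (Ker.Ref.refl A) (Ker.ref_fib T).dbl).h_le
  have e4 := Ker.dbl_dbl_le T
  have e5 := Ker.h_fib T
  have m3 : m ≤ same T.fib.dbl.p T.fib.dbl.B T.fib.dbl.Z - 17 / 16 * T.fib.dbl.h
      + 1 / 8 * (Ker.add A T.fib.dbl).h := by
    by_contra hlt
    push Not at hlt
    rw [← FF_fib] at hlt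
    obtain ⟨ω, h0, hω'⟩ := exists_le_avg T.fib.dbl.hp _ _ (le_refl (∑ ω, T.fib.dbl.p ω *
      (Hc (T.fib.dbl.z ω) (T.fib.dbl.z ω) - 17 / 16 * HH (T.fib.dbl.z ω) id
        + 1 / 8 * ∑ a, A.p a * Hc (A.z a) (T.fib.dbl.z ω))))
    have hω := hω'.trans_lt hlt
    have := hm (Ker.ofLaw _ (T.fib.dbl.z_pr h0))
    unfold FF Ker.dbl at this
    rw [Ker.h_add_ofLaw₂, Ker.h_ofLaw, hA, Ker.h_add_ofLaw₂] at this
    have e : ∑ x, A.p x * Hc (A.z x) (T.fib.dbl.z ω) = Hc a (T.fib.dbl.z ω) := by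
      have hz : ∀ x, A.z x = a := fun x => Ker.z_ofLaw a ha x
      simp_rw [hz]
      rw [← Finset.sum_mul]
      exact (congrArg (· * _) ha.2).trans (one_mul _)
    rw [e] at hω
    unfold Hc Ker.dbl at hω
    linarith
  unfold FF at hT m1 m2
  linarith

lemma pair_fib (a : G → ℝ) (ha : Pr a) (N ξ m : ℝ) (T : Ker G)
    (hT : FF (Ker.ofLaw a ha) T ≤ m + ξ) (hN : 0 ≤ N) (hd : T.dbl.h - T.h ≤ 17 * ξ) :
    ∃ z w : G → ℝ, Pr z ∧ Pr w ∧
      (Hc z w - 17 / 32 * (HH z id + HH w id) + 1 / 16 * (Hc a z + Hc a w))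
        + N * (Hc z w - (HH z id + HH w id) / 2) ≤ m + ξ * (1 + 17 * N) := by
  have key : ∑ x : T.Ω × T.Ω, pd T.p T.p x *
      ((Hc (T.z x.1) (T.z x.2) - 17 / 32 * (HH (T.z x.1) id + HH (T.z x.2) id)
        + 1 / 16 * (Hc a (T.z x.1) + Hc a (T.z x.2)))
        + N * (Hc (T.z x.1) (T.z x.2) - (HH (T.z x.1) id + HH (T.z x.2) id) / 2))
      ≤ m + ξ * (1 + 17 * N) := by
    have s1 : ∑ x : T.Ω × T.Ω, pd T.p T.p x * Hc (T.z x.1) (T.z x.2) = T.dbl.h := by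
      unfold Ker.dbl
      rw [Ker.h_add_eq]
      exact sum_pd T.p T.p fun x y => Hc (T.z x) (T.z y)
    have s2 : ∀ g : T.Ω → ℝ, ∑ x : T.Ω × T.Ω, pd T.p T.p x * g x.1 = ∑ x, T.p x * g x :=
      fun g => push_fst T.hp g
    have s3 : ∀ g : T.Ω → ℝ, ∑ x : T.Ω × T.Ω, pd T.p T.p x * g x.2 = ∑ x, T.p x * g x :=
      fun g => push_snd T.hp g
    have t2 := s2 fun x => HH (T.z x) id
    have t3 := s3 fun x => HH (T.z x) id
    have t4 := s2 fun x => Hc a (T.z x)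
    have t5 := s3 fun x => Hc a (T.z x)
    rw [← T.h_eq] at t2 t3
    have e : (Ker.add (Ker.ofLaw a ha) T).h = ∑ x, T.p x * Hc a (T.z x) := Ker.h_add_ofLaw a ha T
    rw [← e] at t4 t5
    unfold FF at hT
    calc _ = (1 + N) * ∑ x : T.Ω × T.Ω, pd T.p T.p x * Hc (T.z x.1) (T.z x.2)
          - (17 / 32 + N / 2) * (∑ x : T.Ω × T.Ω, pd T.p T.p x * HH (T.z x.1) id
            + ∑ x : T.Ω × T.Ω, pd T.p T.p x * HH (T.z x.2) id)
          + 1 / 16 * (∑ x : T.Ω × T.Ω, pd T.p T.p x * Hc a (T.z x.1)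
            + ∑ x : T.Ω × T.Ω, pd T.p T.p x * Hc a (T.z x.2)) := by
          simp only [Finset.mul_sum, ← Finset.sum_add_distrib, ← Finset.sum_sub_distrib]
          refine Finset.sum_congr rfl fun x _ => ?_
          ring
      _ ≤ _ := by
          rw [s1, t2, t3, t4, t5]
          nlinarith
  obtain ⟨x, h0, hx⟩ := exists_le_avg (T.hp.pd T.hp) _ _ key
  exact ⟨_, _, T.z_pr (left_ne_zero_of_mul h0), T.z_pr (right_ne_zero_of_mul h0), hx⟩

lemma law_add (z w : G → ℝ) (g : G) :
    law (pd z w) (fun x => x.1 + x.2) g = ∑ x, z x * w (g - x) := by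
  unfold law
  rw [Fintype.sum_prod_type]
  refine Finset.sum_congr rfl fun x _ => ?_
  rw [Finset.sum_eq_single (g - x)]
  · simp [ind, pd]
  · intro b _ hb
    have : ¬ x + b = g := fun h => hb (by rw [← h]; abel)
    simp [ind, this]
  · simp

lemma Hc_eq (z w : G → ℝ) : Hc z w = ∑ g, negMulLog (∑ x, z x * w (g - x)) := by
  unfold Hc
  rw [HH_eq_law]
  simp_rw [law_add]

lemma cont_HH : Continuous fun z : G → ℝ => HH z id := by
  simp_rw [HH_id]
  exact continuous_finsetSum _ fun g _ => continuous_negMulLog.comp (continuous_apply g)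

lemma cont_Hc : Continuous fun z : (G → ℝ) × (G → ℝ) => Hc z.1 z.2 := by
  simp_rw [Hc_eq]
  refine continuous_finsetSum _ fun g _ => continuous_negMulLog.comp ?_
  exact continuous_finsetSum _ fun x _ => by fun_prop

lemma exists_min (h2 : ∀ x : G, x + x = 0) (a : G → ℝ) (ha : Pr a) :
    ∃ z w : G → ℝ, Pr z ∧ Pr w ∧ HH z id = Hc z w ∧ HH w id = Hc z w ∧
      Hc z w - 17 / 32 * (HH z id + HH w id) + 1 / 16 * (Hc a z + Hc a w)
        ≤ FF (Ker.ofLaw a ha) (Ker.ofLaw a ha) := by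
  set A := Ker.ofLaw a ha with hA
  set m := sInf (Set.range (FF A)) with hm
  have hbdd : BddBelow (Set.range (FF A)) :=
    ⟨_, by rintro _ ⟨T, rfl⟩; exact FF_ge A T⟩
  have hmle : ∀ S, m ≤ FF A S := fun S => csInf_le hbdd ⟨S, rfl⟩
  let K : Set ((G → ℝ) × (G → ℝ)) := stdSimplex ℝ G ×ˢ stdSimplex ℝ G
  have hK : IsCompact K := (isCompact_stdSimplex ℝ G).prod (isCompact_stdSimplex ℝ G)
  let f : (G → ℝ) × (G → ℝ) → ℝ := fun x =>
    Hc x.1 x.2 - 17 / 32 * (HH x.1 id + HH x.2 id) + 1 / 16 * (Hc a x.1 + Hc a x.2)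
  let d : (G → ℝ) × (G → ℝ) → ℝ := fun x => Hc x.1 x.2 - (HH x.1 id + HH x.2 id) / 2
  have c1 : Continuous fun x : (G → ℝ) × (G → ℝ) => HH x.1 id := cont_HH.comp continuous_fst
  have c2 : Continuous fun x : (G → ℝ) × (G → ℝ) => HH x.2 id := cont_HH.comp continuous_snd
  have c3 : Continuous fun x : (G → ℝ) × (G → ℝ) => Hc a x.1 :=
    cont_Hc.comp (continuous_const.prodMk continuous_fst)
  have c4 : Continuous fun x : (G → ℝ) × (G → ℝ) => Hc a x.2 :=
    cont_Hc.comp (continuous_const.prodMk continuous_snd)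
  have hf : Continuous f :=
    (cont_Hc.sub (continuous_const.mul (c1.add c2))).add (continuous_const.mul (c3.add c4))
  have hd : Continuous d := cont_Hc.sub ((c1.add c2).div_const 2)
  have hd0 : ∀ x ∈ K, 0 ≤ d x := by
    rintro x ⟨hz, hw⟩
    have := le_Hc (z := x.1) (w := x.2) hz hw
    have := le_Hc' (z := x.1) (w := x.2) hz hw
    simp only [d]; linarith
  have step : ∀ N : ℝ, 0 ≤ N → ∃ x ∈ K, f x + N * d x ≤ m := by
    intro N hN
    have ex : ∀ ξ : ℝ, 0 < ξ → ∃ x ∈ K, f x + N * d x ≤ m + ξ * (1 + 17 * N) := by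
      intro ξ hξ
      obtain ⟨_, ⟨T, rfl⟩, hT⟩ := exists_lt_of_csInf_lt (Set.range_nonempty (FF A) (h := ⟨A⟩))
        (show sInf (Set.range (FF A)) < m + ξ by linarith)
      have hd := near_min h2 a ha m ξ hmle T hT.le
      obtain ⟨z, w, hz, hw, hzw⟩ := pair_fib a ha N ξ m T hT.le hN hd
      exact ⟨(z, w), ⟨hz, hw⟩, hzw⟩
    have hKne : K.Nonempty := by
      obtain ⟨x, hx, _⟩ := ex 1 one_pos
      exact ⟨x, hx⟩
    obtain ⟨x, hxK, hx⟩ := hK.exists_isMinOn hKne (hf.add (continuous_const.mul hd)).continuousOn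
      (f := fun x => f x + N * d x)
    refine ⟨x, hxK, le_of_forall_pos_le_add fun e he => ?_⟩
    obtain ⟨y, hyK, hy⟩ := ex (e / (1 + 17 * N)) (by positivity)
    have : f x + N * d x ≤ f y + N * d y := hx hyK
    rw [div_mul_cancel₀ _ (by positivity)] at hy
    linarith
  let K' := K ∩ {x | f x ≤ m}
  have hK' : IsCompact K' := hK.inter_right (isClosed_le hf continuous_const)
  have hK'ne : K'.Nonempty := by
    obtain ⟨x, hx, h⟩ := step 0 le_rfl
    exact ⟨x, hx, by simpa using h⟩
  obtain ⟨x, hxK, hx⟩ := hK'.exists_isMinOn hK'ne hd.continuousOn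
  have hdx : d x ≤ 0 := by
    by_contra hpos
    push Not at hpos
    set C := 17 / 16 * Real.log (Fintype.card G) + m with hC
    have hlow : ∀ y ∈ K, -(17 / 16 * Real.log (Fintype.card G)) ≤ f y := by
      rintro y ⟨hy1, hy2⟩
      have h1 : HH y.1 id ≤ Real.log (Fintype.card G) :=
        HH_le_log (p := y.1) hy1 id Finset.univ fun _ _ => Finset.mem_univ _
      have h2 : HH y.2 id ≤ Real.log (Fintype.card G) :=
        HH_le_log (p := y.2) hy2 id Finset.univ fun _ _ => Finset.mem_univ _
      have h3 : 0 ≤ Hc y.1 y.2 := HH_nonneg (Pr.pd hy1 hy2) _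
      have h4 : 0 ≤ Hc a y.1 := HH_nonneg (Pr.pd ha hy1) _
      have h5 : 0 ≤ Hc a y.2 := HH_nonneg (Pr.pd ha hy2) _
      simp only [f]; linarith
    obtain ⟨y, hyK, hy⟩ := step ((|C| + 1) / d x) (by positivity)
    have hy' : f y ≤ m := by
      have : 0 ≤ (|C| + 1) / d x * d y := mul_nonneg (by positivity) (hd0 y hyK)
      linarith
    have h1 : d x ≤ d y := hx (show y ∈ K' from ⟨hyK, hy'⟩)
    have h2 : (|C| + 1) / d x * d x ≤ (|C| + 1) / d x * d y :=
      mul_le_mul_of_nonneg_left h1 (by positivity)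
    rw [div_mul_cancel₀ _ hpos.ne'] at h2
    have h3 := hlow y hyK
    have := le_abs_self C
    linarith
  obtain ⟨⟨hz, hw⟩, hfx⟩ := hxK
  have l1 := le_Hc (z := x.1) (w := x.2) hz hw
  have l2 := le_Hc' (z := x.1) (w := x.2) hz hw
  simp only [d] at hdx
  exact ⟨x.1, x.2, hz, hw, by linarith, by linarith, le_trans hfx (hmle A)⟩

lemma inv_of_eq {z w : G → ℝ} (hz : Pr z) (hw : Pr w) (h : HH w id = Hc z w) (x y : G)
    (hx : z x ≠ 0) (hy : z y ≠ 0) (g : G) : w (g - x) = w (g - y) := by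
  have hle : ∀ g, ∑ x, z x * negMulLog (w (g - x)) ≤ negMulLog (∑ x, z x * w (g - x)) := by
    intro g
    have := concaveOn_negMulLog.le_map_sum (t := Finset.univ) (w := z) (p := fun x => w (g - x))
      (fun i _ => hz.1 i) hz.2 (fun i _ => hw.1 _)
    simpa using this
  have hsum : ∑ g, ∑ x, z x * negMulLog (w (g - x)) = HH w id := by
    rw [Finset.sum_comm]
    simp_rw [← Finset.mul_sum]
    have : ∀ x, ∑ g, negMulLog (w (g - x)) = HH w id := by
      intro x
      rw [HH_id]
      exact (Equiv.subRight x).sum_comp fun g => negMulLog (w g)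
    simp_rw [this]
    rw [← Finset.sum_mul, hz.2, one_mul]
  rw [Hc_eq, ← hsum] at h
  have heq := (Finset.sum_eq_sum_iff_of_le fun g _ => hle g).1 h g (Finset.mem_univ g)
  have := (strictConcaveOn_negMulLog.map_sum_eq_iff' (t := Finset.univ) (w := z)
    (p := fun x => w (g - x)) (fun i _ => hz.1 i) hz.2 (fun i _ => hw.1 _)).1 (by simpa using heq.symm)
  rw [this x (Finset.mem_univ _) hx, this y (Finset.mem_univ _) hy]

def stab (w : G → ℝ) : AddSubgroup G where
  carrier := {v | ∀ g, w (g + v) = w g}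
  add_mem' := fun {a b} ha hb g => by rw [← add_assoc, hb, ha]
  zero_mem' := fun g => by rw [add_zero]
  neg_mem' := fun {a} ha g => by rw [← ha (g + -a)]; simp

lemma ent_inv {s : G → ℝ} (hs : Pr s) (V : AddSubgroup G) (hV : V ≤ stab s) :
    HH s id = Real.log (Nat.card V) + HH s (QuotientAddGroup.mk (s := V)) := by
  classical
  have hcard : (0:ℝ) < Nat.card V := by exact_mod_cast Nat.card_pos
  have hm : ∀ g, mm s (QuotientAddGroup.mk (s := V)) g = Nat.card V * s g := by
    intro g
    unfold mm
    have e : ∑ g', s g' * ind ((g' : G ⧸ V) = (g : G ⧸ V)) = ∑ v, s (g + v) * ind (v ∈ V) := by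
      refine (Fintype.sum_equiv (Equiv.addLeft g) _ _ fun v => ?_).symm
      simp only [Equiv.coe_addLeft]
      congr 1
      apply ind_congr
      rw [eq_comm, QuotientAddGroup.eq]
      simp
    rw [e]
    have e2 : ∀ v, s (g + v) * ind (v ∈ V) = if v ∈ V then s g else 0 := by
      intro v
      unfold ind
      by_cases hv : v ∈ V
      · simp [hv, hV hv g]
      · simp [hv]
    simp_rw [e2]
    rw [← Finset.sum_filter, Finset.sum_const, nsmul_eq_mul]
    congr 2
    rw [Nat.card_eq_fintype_card, Fintype.card_subtype]
  have hm1 : ∀ g, mm s id g = s g := by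
    intro g
    unfold mm
    rw [Finset.sum_eq_single g]
    · simp [ind]
    · intro b _ hb; simp [ind, hb]
    · simp
  unfold HH
  simp_rw [hm, hm1]
  have : Real.log (Nat.card V) = ∑ g, s g * Real.log (Nat.card V) := by
    rw [← Finset.sum_mul, hs.2, one_mul]
  rw [this, ← Finset.sum_add_distrib]
  refine Finset.sum_congr rfl fun g _ => ?_
  by_cases h0 : s g = 0
  · simp [h0]
  rw [Real.log_mul hcard.ne' h0]; ring

lemma ent_coset_le {s : G → ℝ} (hs : Pr s) (V : AddSubgroup G) (x : G)
    (h : ∀ y, s y ≠ 0 → y - x ∈ V) : HH s id ≤ Real.log (Nat.card V) := by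
  classical
  have := HH_le_log hs id ((Finset.univ.filter fun v => v ∈ V).image fun v => v + x) (by
    intro y hy
    simp only [Finset.mem_image, Finset.mem_filter, Finset.mem_univ, true_and, id]
    exact ⟨y - x, h y hy, by simp⟩)
  rw [Finset.card_image_of_injective _ (add_left_injective x)] at this
  rwa [Nat.card_eq_fintype_card, Fintype.card_subtype]

lemma ent_le_quot {s : G → ℝ} (hs : Pr s) (V : AddSubgroup G) :
    HH s id ≤ Real.log (Nat.card V) + HH s (QuotientAddGroup.mk (s := V)) := by
  have h1 := HH_chain hs id (QuotientAddGroup.mk (s := V))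
  have h2 := HH_mono hs id (fun x => (id x, (x : G ⧸ V))) (fun x y _ _ h => (Prod.mk.inj h).1)
  have h3 : ∑ ω, s ω * HH (cnd s (QuotientAddGroup.mk (s := V)) ω) id ≤
      ∑ ω, s ω * Real.log (Nat.card V) := by
    refine Finset.sum_le_sum fun ω _ => ?_
    by_cases h0 : s ω = 0
    · simp [h0]
    refine mul_le_mul_of_nonneg_left ?_ (hs.1 ω)
    refine ent_coset_le (hs.cnd _ h0) V ω fun y hy => ?_
    have := (cnd_ne_zero hy).2
    rw [eq_comm, QuotientAddGroup.eq] at this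
    rwa [sub_eq_neg_add]
  rw [← Finset.sum_mul, hs.2, one_mul] at h3
  linarith

lemma Hc_ge_inv {a w : G → ℝ} (ha : Pr a) (hw : Pr w) (V : AddSubgroup G) (hV : V ≤ stab w) :
    Real.log (Nat.card V) + HH a (QuotientAddGroup.mk (s := V)) ≤ Hc a w := by
  set s := law (pd a w) (fun x : G × G => x.1 + x.2) with hs
  have hsp : Pr s := (ha.pd hw).law _
  have e1 : Hc a w = HH s id := by
    rw [← (push_law (pd a w) (fun x : G × G => x.1 + x.2)).HH id]; rfl
  have e2 : V ≤ stab s := by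
    intro v hv g
    rw [hs, law_add, law_add]
    refine Finset.sum_congr rfl fun x _ => ?_
    rw [show g + v - x = (g - x) + v by abel, hV hv]
  rw [e1, ent_inv hsp V e2]
  have e3 : HH s (QuotientAddGroup.mk (s := V)) =
      HH (pd a w) (fun x => ((x.1 + x.2 : G) : G ⧸ V)) :=
    ((push_law (pd a w) (fun x : G × G => x.1 + x.2)).HH (QuotientAddGroup.mk (s := V))).symm
  rw [e3]
  have := Ker.h_le_add (Ker.map (QuotientAddGroup.mk (s := V)) (Ker.ofLaw a ha))
    (Ker.map (QuotientAddGroup.mk (s := V)) (Ker.ofLaw w hw))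
  have k1 : (Ker.map (QuotientAddGroup.mk (s := V)) (Ker.ofLaw a ha)).h =
      HH a (QuotientAddGroup.mk (s := V)) := by
    have : (Ker.map (QuotientAddGroup.mk (s := V)) (Ker.ofLaw a ha)).h =
      HH a (fun x => ((x : G ⧸ V), ())) - HH a (fun _ => ()) := rfl
    rw [this, HH_const ha (fun _ => ()) fun _ _ => rfl, sub_zero]
    exact HH_congr' _ _ fun x y => by simp
  have k2 : (Ker.add (Ker.map (QuotientAddGroup.mk (s := V)) (Ker.ofLaw a ha))
    (Ker.map (QuotientAddGroup.mk (s := V)) (Ker.ofLaw w hw))).h =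
      HH (pd a w) (fun x => ((x.1 + x.2 : G) : G ⧸ V)) := by
    have : (Ker.add (Ker.map (QuotientAddGroup.mk (s := V)) (Ker.ofLaw a ha))
      (Ker.map (QuotientAddGroup.mk (s := V)) (Ker.ofLaw w hw))).h =
      HH (pd a w) (fun x => ((x.1 : G ⧸ V) + (x.2 : G ⧸ V), ((), ()))) -
        HH (pd a w) (fun _ => ((), ())) := rfl
    rw [this, HH_const (ha.pd hw) (fun _ => ((), ())) fun _ _ => rfl, sub_zero]
    exact HH_congr' _ _ fun x y => by simp
  linarith

/-- entropic PFR-type lemma -/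
lemma pfr (h2 : ∀ x : G, x + x = 0) (a : G → ℝ) (ha : Pr a) :
    ∃ V : AddSubgroup G,
      HH a (QuotientAddGroup.mk (s := V)) ≤ 18 * (Hc a a - HH a id) ∧
      Real.log (Nat.card V) ≤ HH a id + 18 * (Hc a a - HH a id) := by
  obtain ⟨z, w, hz, hw, ez, ew, hf⟩ := exists_min h2 a ha
  unfold FF Ker.dbl at hf
  rw [Ker.h_add_ofLaw₂, Ker.h_ofLaw] at hf
  change _ ≤ Hc a a - 17 / 16 * HH a id + 1 / 8 * Hc a a at hf
  have exne : ∀ {z : G → ℝ}, Pr z → ∃ x, z x ≠ 0 := by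
    intro z hz
    by_contra h3
    push Not at h3
    have := hz.2
    simp [h3] at this
  have hcomm : Hc z w = Hc w z := by
    rw [Hc_ker z w hz hw, Hc_ker w z hw hz, Ker.add_comm_h]
  obtain ⟨x0, hx0⟩ := exne hz
  obtain ⟨y0, hy0⟩ := exne hw
  have a1 : HH z id ≤ Real.log (Nat.card (stab w)) := by
    refine ent_coset_le hz _ x0 fun y hy g => ?_
    have := inv_of_eq hz hw ew x0 y hx0 hy (g + y)
    rw [show g + (y - x0) = g + y - x0 by abel, this]; simp
  have a2 : HH w id ≤ Real.log (Nat.card (stab z)) := by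
    refine ent_coset_le hw _ y0 fun y hy g => ?_
    have := inv_of_eq hw hz (by rw [ez, hcomm]) y0 y hy0 hy (g + y)
    rw [show g + (y - y0) = g + y - y0 by abel, this]; simp
  have b1 := ent_inv hw (stab w) le_rfl
  have b2 := ent_inv hz (stab z) le_rfl
  have n1 := HH_nonneg hw (QuotientAddGroup.mk (s := stab w))
  have n2 := HH_nonneg hz (QuotientAddGroup.mk (s := stab z))
  have c1 := Hc_ge_inv ha hw (stab w) le_rfl
  have c2 := Hc_ge_inv ha hz (stab z) le_rfl
  have d1 := ent_le_quot ha (stab w)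
  have d2 := ent_le_quot ha (stab z)
  rcases le_total (HH a (QuotientAddGroup.mk (s := stab w)))
    (HH a (QuotientAddGroup.mk (s := stab z))) with hle | hle
  · refine ⟨stab w, ?_, ?_⟩
    · linarith
    · have := HH_nonneg ha (QuotientAddGroup.mk (s := stab w))
      linarith
  · refine ⟨stab z, ?_, ?_⟩
    · linarith
    · have := HH_nonneg ha (QuotientAddGroup.mk (s := stab z))
      linarith
end PF

namespace PF
namespace Ker

lemma map_add_h {G G' : Type} [AddCommGroup G] [AddCommGroup G'] (ρ : G →+ G') (S T : Ker G) :
    (map ρ (Ker.add S T)).h = (Ker.add (map ρ S) (map ρ T)).h := by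
  have : map ρ (Ker.add S T) = Ker.add (map ρ S) (map ρ T) := by
    simp only [map, Ker.add, map_add]
    rfl
  rw [this]

lemma map_dbl {G G' : Type} [AddCommGroup G] [AddCommGroup G'] (ρ : G →+ G') (S : Ker G) :
    map ρ S.dbl = (map ρ S).dbl := by
  simp only [map, Ker.add, map_add, Ker.dbl]
  rfl

lemma map_add' {G G' : Type} [AddCommGroup G] [AddCommGroup G'] (ρ : G →+ G') (S T : Ker G) :
    map ρ (Ker.add S T) = Ker.add (map ρ S) (map ρ T) := by
  simp only [map, Ker.add, map_add]
  rfl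

lemma sub_map_le {G G' : Type} [AddCommGroup G] [AddCommGroup G'] (ρ : G →+ G') (S T : Ker G) :
    S.h - (map ρ S).h ≤ (Ker.add S T).h - (map ρ (Ker.add S T)).h := by
  let T' : Ker G := 
    { Ω := S.Ω × T.Ω
      p := pd S.p T.p
      hp := S.hp.pd T.hp
      β := (S.β × T.β) × G
      B := fun x => ((S.B x.1, T.B x.2), T.Z x.2)
      Z := fun x => S.Z x.1 + T.Z x.2 }
  have r : Ref T' (Ker.add S T) :=
    ⟨id, fun _ => rfl, fun _ => rfl, fun ω ω' e => (Prod.mk.inj e).1⟩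
  have := r.h_sub_le ρ
  have kb : HH T'.p T'.B = HH S.p S.B + HH T.p (fun ω => (T.B ω, T.Z ω)) := by
    rw [← HH_pd S.hp T.hp]
    refine HH_congr' _ _ fun x y => ?_
    simp only [T', Prod.mk.injEq]
    tauto
  have k1 : HH T'.p (fun ω => (T'.Z ω, T'.B ω)) =
      HH S.p (fun ω => (S.Z ω, S.B ω)) + HH T.p (fun ω => (T.B ω, T.Z ω)) := by
    rw [← HH_pd S.hp T.hp]
    refine HH_congr' _ _ fun x y => ?_
    simp only [T', Prod.mk.injEq]
    constructor
    · rintro ⟨u, ⟨v, w⟩, t⟩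
      rw [t] at u
      exact ⟨⟨add_right_cancel u, v⟩, w, t⟩
    · rintro ⟨⟨u, v⟩, w, t⟩
      rw [u, t]; exact ⟨rfl, ⟨v, w⟩, rfl⟩
  have k2 : HH T'.p (fun ω => (ρ (T'.Z ω), T'.B ω)) =
      HH S.p (fun ω => (ρ (S.Z ω), S.B ω)) + HH T.p (fun ω => (T.B ω, T.Z ω)) := by
    rw [← HH_pd S.hp T.hp]
    refine HH_congr' _ _ fun x y => ?_
    simp only [T', Prod.mk.injEq, map_add]
    constructor
    · rintro ⟨u, ⟨v, w⟩, t⟩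
      rw [t] at u
      exact ⟨⟨add_right_cancel u, v⟩, w, t⟩
    · rintro ⟨⟨u, v⟩, w, t⟩
      rw [u, t]; exact ⟨rfl, ⟨v, w⟩, rfl⟩
  have e1 : T'.h = S.h := by
    unfold h; linarith
  have e2 : (map ρ T').h = (map ρ S).h := by
    have a1 : (map ρ T').h = HH T'.p (fun ω => (ρ (T'.Z ω), T'.B ω)) - HH T'.p T'.B := rfl
    have a2 : (map ρ S).h = HH S.p (fun ω => (ρ (S.Z ω), S.B ω)) - HH S.p S.B := rfl
    linarith
  linarith

lemma quot_h_le {G G' : Type} [AddCommGroup G] [Fintype G] [AddCommGroup G'] (ρ : G →+ G')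
    (a : G → ℝ) (ha : Pr a) (Q : Ker G) :
    (map ρ Q).h ≤ (Ker.add (ofLaw a ha) Q).h - HH a id + HH a ρ := by
  have h1 := sub_map_le ρ (ofLaw a ha) Q
  rw [map_add_h] at h1
  have h2 := h_le_add (map ρ Q) (map ρ (ofLaw a ha))
  rw [add_comm_h] at h2
  rw [h_ofLaw] at h1
  have h3 : (map ρ (ofLaw a ha)).h = HH a ρ := by
    have a1 : (map ρ (ofLaw a ha)).h = HH a (fun x => (ρ x, ())) - HH a (fun _ => ()) := rfl
    rw [a1, HH_const ha (fun _ => ()) (fun _ _ => rfl), sub_zero]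
    refine HH_congr' _ _ fun x y => ?_
    simp
  linarith

end Ker

def itd {G : Type} [Add G] (T : Ker G) : ℕ → Ker G
  | 0 => T
  | j+1 => itd T.dbl j

lemma itd_ref {G : Type} [AddCommGroup G] {T' T : Ker G} (r : Ker.Ref T' T) (j : ℕ) :
    Ker.Ref (itd T' j) (itd T j) := by
  induction j generalizing T T' with
  | zero => exact r
  | succ k ih => exact ih r.dbl

lemma itd_map {G G' : Type} [AddCommGroup G] [AddCommGroup G'] (ρ : G →+ G') (T : Ker G) (j : ℕ) :
    Ker.map ρ (itd T j) = itd (Ker.map ρ T) j := by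
  induction j generalizing T with
  | zero => rfl
  | succ k ih => exact (ih T.dbl).trans (by rw [Ker.map_dbl]; rfl)

lemma itd_h_le {G : Type} [AddCommGroup G] (T : Ker G) (j : ℕ) : (itd T j).h ≤ 2 ^ j * T.h := by
  induction j generalizing T with
  | zero => simp [itd]
  | succ k ih =>
    have h1 := ih T.dbl
    have h2 : T.dbl.h ≤ 2 * T.h := by
      have := Ker.add_le T T
      unfold Ker.dbl; linarith
    have : (itd T (k+1)).h = (itd T.dbl k).h := rfl
    rw [this, pow_succ]
    nlinarith [pow_pos (show (0:ℝ) < 2 by norm_num) k]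

/-- final step -/
lemma final_step {G : Type} [AddCommGroup G] [Fintype G] (h2 : ∀ x : G, x + x = 0) {ε : ℝ}
    (hε : 0 < ε) (hε1 : ε ≤ 1) (T : Ker G) (hT : 0 < T.h) (hd : T.dbl.h ≤ (2 - ε) * T.h)
    (hI : T.I ≤ ε ^ 2 / 500 * T.h)
    (h4 : 2 * T.dbl.h - T.dbl.dbl.h ≤ T.h - (T.dbl.h - T.h) ^ 2 / T.h + ε ^ 2 / 500 * T.h) :
    ∃ V : AddSubgroup G, ε ^ 2 / 8 * Real.log (Nat.card V) <
      T.dbl.h - (Ker.map (QuotientAddGroup.mk' V) T.dbl).h := by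
  obtain ⟨i1, i2⟩ := Ker.fibring h2 T
  have hIdef : T.I = 2 * T.dbl.h - T.dbl.dbl.h - T.fib.dbl.h := rfl
  have e4 := Ker.dbl_dbl_le T.fib
  have e5 := Ker.h_fib T
  have e6 : T.h ≤ T.dbl.h := Ker.h_le_add T T
  set Q := T.fib.dbl with hQ
  have rQ : Ker.Ref Q T.dbl := (Ker.ref_fib T).dbl
  have s1 : ∑ ω, Q.p ω * (36 * (Hc (Q.z ω) (Q.z ω) - HH (Q.z ω) id) + ε ^ 2 / 8 * HH (Q.z ω) id
      - (HH (Q.z ω) id + Q.h - ∑ b, Q.p b * Hc (Q.z ω) (Q.z b))) =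
      36 * (same Q.p Q.B Q.Z - Q.h) + ε ^ 2 / 8 * Q.h - (2 * Q.h - Q.dbl.h) := by
    have a1 : Q.dbl.h = ∑ a, Q.p a * ∑ b, Q.p b * Hc (Q.z a) (Q.z b) := Ker.h_add_eq Q Q
    have a2 : same Q.p Q.B Q.Z = ∑ a, Q.p a * Hc (Q.z a) (Q.z a) := Q.same_eq
    have a3 := Q.h_eq
    have a4 : ∑ ω, Q.p ω * (36 * (Hc (Q.z ω) (Q.z ω) - HH (Q.z ω) id) + ε ^ 2 / 8 * HH (Q.z ω) id
      - (HH (Q.z ω) id + Q.h - ∑ b, Q.p b * Hc (Q.z ω) (Q.z b))) =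
      36 * (∑ a, Q.p a * Hc (Q.z a) (Q.z a)) + (ε ^ 2 / 8 - 37) * ∑ ω, Q.p ω * HH (Q.z ω) id
        - (∑ ω, Q.p ω) * Q.h + ∑ a, Q.p a * ∑ b, Q.p b * Hc (Q.z a) (Q.z b) := by
      rw [Finset.mul_sum, Finset.mul_sum, Finset.sum_mul, ← Finset.sum_add_distrib,
        ← Finset.sum_sub_distrib, ← Finset.sum_add_distrib]
      refine Finset.sum_congr rfl fun _ _ => ?_
      ring
    rw [a4, Q.hp.2, ← a1, ← a2, ← a3]
    ring
  have k1 : ε ^ 2 * T.h ≤ (2 * T.h - T.dbl.h) ^ 2 / T.h := by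
    rw [le_div_iff₀ hT]
    have : 0 ≤ ε * T.h := by positivity
    nlinarith
  have k2 : (2 * T.h - T.dbl.h) ^ 2 / T.h =
      T.h - 2 * (T.dbl.h - T.h) + (T.dbl.h - T.h) ^ 2 / T.h := by
    field_simp
    ring
  have k3 : 0 ≤ (T.dbl.h - T.h) ^ 2 / T.h := by positivity
  have ε1 : ε ^ 2 ≤ 1 := by nlinarith
  have ε0 : 0 < ε ^ 2 := by positivity
  have k4 : Q.h ≤ 2 * T.h := by nlinarith
  have k5 : ε ^ 2 / 8 * Q.h ≤ ε ^ 2 / 8 * (2 * T.h) := mul_le_mul_of_nonneg_left k4 (by positivity)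
  have k6 : 0 < ε ^ 2 * T.h := by positivity
  have neg : 36 * (same Q.p Q.B Q.Z - Q.h) + ε ^ 2 / 8 * Q.h - (2 * Q.h - Q.dbl.h) < 0 := by
    linarith
  obtain ⟨ω, h0, hω⟩ := exists_le_avg Q.hp _ _ s1.le
  have hz := Q.z_pr h0
  have hadd : (Ker.add (Ker.ofLaw _ hz) Q).h = ∑ b, Q.p b * Hc (Q.z ω) (Q.z b) :=
    Ker.h_add_ofLaw _ hz Q
  obtain ⟨V, v1, v2⟩ := pfr h2 (Q.z ω) hz
  refine ⟨V, ?_⟩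
  have r1 := rQ.h_sub_le (QuotientAddGroup.mk' V)
  have r2 := Ker.quot_h_le (QuotientAddGroup.mk' V) _ hz Q
  have r3 : HH (Q.z ω) (QuotientAddGroup.mk' V) ≤ 18 * (Hc (Q.z ω) (Q.z ω) - HH (Q.z ω) id) := v1
  have r4 := le_Hc hz hz
  have r5 := mul_le_mul_of_nonneg_left v2 (show 0 ≤ ε ^ 2 / 8 by positivity)
  have r6 : ε ^ 2 / 8 * (18 * (Hc (Q.z ω) (Q.z ω) - HH (Q.z ω) id)) ≤
      1 * (18 * (Hc (Q.z ω) (Q.z ω) - HH (Q.z ω) id)) :=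
    mul_le_mul_of_nonneg_right (by linarith) (by linarith)
  linarith

lemma claim {G : Type} [AddCommGroup G] [Fintype G] (h2 : ∀ x : G, x + x = 0) {ε : ℝ}
    (hε : 0 < ε) (hε1 : ε ≤ 1) (n : ℕ) : ∀ (T : Ker G), 0 < T.h → T.dbl.h ≤ (2 - ε) * T.h →
    T.dbl.h ≤ (1 + n * (ε ^ 2 / 1000)) * T.h →
    ∃ j ≤ n + 1, ∃ V : AddSubgroup G, ε ^ 2 / 8 * Real.log (Nat.card V) <
      (itd T j).h - (Ker.map (QuotientAddGroup.mk' V) (itd T j)).h := by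
  induction n with
  | zero =>
    intro T hT hd hn
    have e6 : T.h ≤ T.dbl.h := Ker.h_le_add T T
    have e7 : T.dbl.h ≤ T.dbl.dbl.h := Ker.h_le_add _ _
    have e8 : T.fib.h ≤ T.fib.dbl.h := Ker.h_le_add _ _
    have e5 := Ker.h_fib T
    have hIdef : T.I = 2 * T.dbl.h - T.dbl.dbl.h - T.fib.dbl.h := rfl
    have e9 : T.dbl.h = T.h := by
      simp at hn
      linarith
    have ε0 : 0 < ε ^ 2 := by positivity
    have k6 : 0 < ε ^ 2 * T.h := by positivity
    obtain ⟨V, hV⟩ := final_step h2 hε hε1 T hT hd (by linarith) (by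
      rw [e9, sub_self]; simp; linarith)
    exact ⟨1, by omega, V, hV⟩
  | succ n ih =>
    intro T hT hd hn
    have e6 : T.h ≤ T.dbl.h := Ker.h_le_add T T
    have e5 := Ker.h_fib T
    have hIdef : T.I = 2 * T.dbl.h - T.dbl.dbl.h - T.fib.dbl.h := rfl
    have ε0 : 0 < ε ^ 2 := by positivity
    set δ := ε ^ 2 / 1000 with hδ
    have δ0 : 0 < δ := by positivity
    obtain ⟨κ, hκ⟩ : ∃ κ, T.dbl.h = (1 + κ) * T.h :=
      ⟨T.dbl.h / T.h - 1, by field_simp; ring⟩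
    have κ0 : 0 ≤ κ := by
      by_contra hc
      push Not at hc
      nlinarith
    have κ1 : κ ≤ 1 - ε := by
      rw [hκ] at hd
      have := le_of_mul_le_mul_right hd hT
      linarith
    have κ2 : κ ≤ (n + 1) * δ := by
      rw [hκ] at hn
      have := le_of_mul_le_mul_right hn hT
      push_cast at this
      linarith
    have hd0 : 0 < T.dbl.h := by linarith
    have hf : T.fib.h = (1 - κ) * T.h := by rw [e5, hκ]; ring
    have hf0 : 0 < T.fib.h := by rw [hf]; apply mul_pos _ hT; linarith
    by_cases c1 : T.dbl.dbl.h < (1 + κ - δ) * T.dbl.h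
    · obtain ⟨j, hj, V, hV⟩ := ih T.dbl hd0
        (c1.le.trans (mul_le_mul_of_nonneg_right (by linarith) hd0.le))
        (c1.le.trans (mul_le_mul_of_nonneg_right (by linarith) hd0.le))
      exact ⟨j + 1, by omega, V, hV⟩
    by_cases c2 : T.fib.dbl.h < (1 + κ - δ) * T.fib.h
    · obtain ⟨j, hj, V, hV⟩ := ih T.fib hf0
        (c2.le.trans (mul_le_mul_of_nonneg_right (by linarith) hf0.le))
        (c2.le.trans (mul_le_mul_of_nonneg_right (by linarith) hf0.le))
      exact ⟨j, by omega, V, hV.trans_le ((itd_ref (Ker.ref_fib T) j).h_sub_le _)⟩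
    push Not at c1 c2
    rw [hf] at c2
    rw [hκ] at c1
    have k6 : 0 < δ * T.h := by positivity
    have kk : ε ^ 2 / 500 * T.h = 2 * (δ * T.h) := by rw [hδ]; ring
    have dd : (T.dbl.h - T.h) ^ 2 / T.h = κ ^ 2 * T.h := by
      rw [hκ]; field_simp; ring
    obtain ⟨V, hV⟩ := final_step h2 hε hε1 T hT hd (by
        rw [hIdef, hκ, kk]
        nlinarith) (by
        rw [dd, hκ, kk]
        nlinarith)
    exact ⟨1, by omega, V, hV⟩
end PF

namespace PF

lemma h_map_ofLaw {G G' : Type} [Fintype G] (ρ : G → G')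
    (a : G → ℝ) (ha : Pr a) : (Ker.map ρ (Ker.ofLaw a ha)).h = HH a ρ := by
  have a1 : (Ker.map ρ (Ker.ofLaw a ha)).h = HH a (fun x => (ρ x, ())) - HH a (fun _ => ()) := rfl
  rw [a1, HH_const ha (fun _ => ()) (fun _ _ => rfl), sub_zero]
  refine HH_congr' _ _ fun x y => ?_
  simp

lemma h_map_congr {G G₁ G₂ : Type} (ρ : G → G₁) (σ : G → G₂) (S : Ker G)
    (h : ∀ x y, ρ x = ρ y ↔ σ x = σ y) : (Ker.map ρ S).h = (Ker.map σ S).h := by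
  have a1 : (Ker.map ρ S).h = HH S.p (fun ω => (ρ (S.Z ω), S.B ω)) - HH S.p S.B := rfl
  have a2 : (Ker.map σ S).h = HH S.p (fun ω => (σ (S.Z ω), S.B ω)) - HH S.p S.B := rfl
  rw [a1, a2]
  congr 1
  refine HH_congr' _ _ fun x y => ?_
  simp only [Prod.mk.injEq, h]

lemma dbl_add_le {G : Type} [AddCommGroup G] (P Q : Ker G) :
    (Ker.add P Q).dbl.h ≤ 3 * (Ker.add P Q).h - P.h - Q.h := by
  have h1 : (Ker.add P Q).dbl.h = (Ker.add (Ker.add (Ker.add P Q) P) Q).h :=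
    (Ker.add_assoc_h _ _ _).symm
  have h2 := Ker.KV (Ker.add P Q) P Q
  have h3 := Ker.KV P Q P
  have h4 := Ker.add_comm_h Q P
  linarith

lemma card_comap_quot {G : Type} [AddCommGroup G] [Finite G] (V : AddSubgroup G)
    (W : AddSubgroup (G ⧸ V)) :
    Nat.card (W.comap (QuotientAddGroup.mk' V)) = Nat.card V * Nat.card W := by
  have h1 := AddSubgroup.index_comap_of_surjective W (f := QuotientAddGroup.mk' V)
    (QuotientAddGroup.mk'_surjective V)
  have h2 := (W.comap (QuotientAddGroup.mk' V)).card_mul_index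
  have h3 := V.card_mul_index
  have h4 := W.card_mul_index
  have h5 : V.index = Nat.card (G ⧸ V) := rfl
  have h6 : W.index ≠ 0 := AddSubgroup.index_ne_zero_of_finite
  rw [h1] at h2
  rw [h5, ← h4] at h3
  apply Nat.eq_of_mul_eq_mul_right (Nat.pos_of_ne_zero h6)
  rw [h2, ← h3]; ring

theorem outer (ε : ℝ) (hε : 0 < ε) (hε1 : ε ≤ 1) : ∃ L : ℝ, 0 < L ∧
    ∀ (G : Type) [AddCommGroup G] [Fintype G] (_ : ∀ x : G, x + x = 0) (p q : G → ℝ)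
      (hp : Pr p) (hq : Pr q), ∃ V : AddSubgroup G,
      Real.log (Nat.card V) ≤ L * (HH p id + HH q id) ∧
      HH p (QuotientAddGroup.mk' V) + HH q (QuotientAddGroup.mk' V) - ε * (HH p id + HH q id) ≤
      (Ker.map (QuotientAddGroup.mk' V) (Ker.add (Ker.ofLaw p hp) (Ker.ofLaw q hq))).h := by
  obtain ⟨N, hN⟩ := exists_nat_ge (1 / (ε ^ 2 / 1000))
  have δ0 : 0 < ε ^ 2 / 1000 := by positivity
  rw [div_le_iff₀ δ0] at hN
  have η0 : 0 < ε ^ 2 / 8 := by positivity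
  refine ⟨(∑ j ∈ Finset.range (N + 2), (2:ℝ) ^ j) / (ε ^ 2 / 8), ?_, ?_⟩
  · apply div_pos _ η0
    exact Finset.sum_pos (fun _ _ => by positivity) ⟨0, by simp⟩
  intro G _ _ h2 p q hp hq
  set T := Ker.add (Ker.ofLaw p hp) (Ker.ofLaw q hq) with hT
  have hTle : T.h ≤ HH p id + HH q id := by
    have := Ker.add_le (Ker.ofLaw p hp) (Ker.ofLaw q hq)
    rwa [Ker.h_ofLaw, Ker.h_ofLaw] at this
  let Ψ : AddSubgroup G → ℝ := fun V =>
    ∑ j ∈ Finset.range (N + 2), (Ker.map (QuotientAddGroup.mk' V) (itd T j)).h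
      + ε ^ 2 / 8 * Real.log (Nat.card V)
  obtain ⟨V, hV⟩ := Finite.exists_min Ψ
  refine ⟨V, ?_, ?_⟩
  · have h0 := hV ⊥
    have b1 : Ψ ⊥ ≤ (∑ j ∈ Finset.range (N + 2), (2:ℝ) ^ j) * (HH p id + HH q id) := by
      simp only [Ψ]
      rw [AddSubgroup.card_bot, Nat.cast_one, Real.log_one, mul_zero, add_zero, Finset.sum_mul]
      refine Finset.sum_le_sum fun j _ => ?_
      refine (Ker.h_map_le _ _).trans ((itd_h_le T j).trans ?_)
      exact mul_le_mul_of_nonneg_left hTle (by positivity)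
    have b2 : ε ^ 2 / 8 * Real.log (Nat.card V) ≤ Ψ V :=
      le_add_of_nonneg_left (Finset.sum_nonneg fun j _ => Ker.h_nonneg _)
    rw [div_mul_eq_mul_div, le_div_iff₀ η0]
    linarith
  · set ρ := QuotientAddGroup.mk' V with hρ
    set S := Ker.map ρ T with hS
    have hSP : S = Ker.add (Ker.map ρ (Ker.ofLaw p hp)) (Ker.map ρ (Ker.ofLaw q hq)) :=
      Ker.map_add' _ _ _
    have hP := h_map_ofLaw ρ p hp
    have hQ := h_map_ofLaw ρ q hq
    have hp0 := HH_nonneg hp id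
    have hq0 := HH_nonneg hq id
    have hle : S.h ≤ HH p id + HH q id := (Ker.h_map_le _ _).trans hTle
    have hP' : HH p ρ ≤ S.h := by
      rw [← hP, hSP]; exact Ker.h_le_add _ _
    have hQ' : HH q ρ ≤ S.h := by
      rw [← hQ, hSP, Ker.add_comm_h]; exact Ker.h_le_add _ _
    have hS0 : 0 ≤ S.h := S.h_nonneg
    by_cases c0 : S.h = 0
    · have : 0 ≤ ε * (HH p id + HH q id) := by positivity
      linarith
    have c0 : 0 < S.h := lt_of_le_of_ne hS0 (Ne.symm c0)
    by_cases c1 : S.dbl.h ≤ (2 - ε) * S.h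
    · exfalso
      have : Fintype (G ⧸ V) := Fintype.ofFinite _
      have h2' : ∀ x : G ⧸ V, x + x = 0 := by
        intro x
        obtain ⟨y, rfl⟩ := QuotientAddGroup.mk'_surjective V x
        rw [← map_add, h2, map_zero]
      obtain ⟨j, hj, W, hW⟩ := claim h2' hε hε1 N S c0 c1 (by
        have : S.dbl.h ≤ 2 * S.h := by
          have := Ker.add_le S S
          unfold Ker.dbl; linarith
        refine this.trans (mul_le_mul_of_nonneg_right ?_ hS0)
        linarith)
      have key : Ψ (W.comap ρ) < Ψ V := by
        have hmap : ∀ i, (Ker.map (QuotientAddGroup.mk' (W.comap ρ)) (itd T i)).h =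
            (Ker.map (QuotientAddGroup.mk' W) (Ker.map ρ (itd T i))).h := by
          intro i
          have : (Ker.map (QuotientAddGroup.mk' W) (Ker.map ρ (itd T i))).h =
            (Ker.map (fun x => QuotientAddGroup.mk' W (ρ x)) (itd T i)).h := rfl
          rw [this]
          refine h_map_congr _ _ _ fun x y => ?_
          simp only [QuotientAddGroup.mk'_apply, QuotientAddGroup.eq, AddSubgroup.mem_comap,
            map_add, map_neg]
        have hlog : Real.log (Nat.card (W.comap ρ)) =
            Real.log (Nat.card V) + Real.log (Nat.card W) := by
          rw [hρ, card_comap_quot, Nat.cast_mul, Real.log_mul]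
          · exact_mod_cast Nat.card_pos.ne'
          · exact_mod_cast Nat.card_pos.ne'
        have hsum : ∑ i ∈ Finset.range (N + 2), (Ker.map (QuotientAddGroup.mk' (W.comap ρ)) (itd T i)).h
            + ε ^ 2 / 8 * Real.log (Nat.card W)
            < ∑ i ∈ Finset.range (N + 2), (Ker.map ρ (itd T i)).h := by
          have hjm : j ∈ Finset.range (N + 2) := by simp; omega
          rw [← Finset.add_sum_erase _ _ hjm, ← Finset.add_sum_erase _ _ hjm]
          have e1 : ∑ i ∈ (Finset.range (N + 2)).erase j,
              (Ker.map (QuotientAddGroup.mk' (W.comap ρ)) (itd T i)).h ≤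
              ∑ i ∈ (Finset.range (N + 2)).erase j, (Ker.map ρ (itd T i)).h :=
            Finset.sum_le_sum fun i _ => by rw [hmap]; exact Ker.h_map_le _ _
          have e2 := hmap j
          have e3 := itd_map ρ T j
          rw [← hS] at e3
          rw [← e3] at hW
          linarith
        simp only [Ψ]
        rw [hlog]
        linarith
      exact absurd (hV (W.comap ρ)) (not_le.mpr key)
    · push Not at c1
      have h3 := dbl_add_le (Ker.map ρ (Ker.ofLaw p hp)) (Ker.map ρ (Ker.ofLaw q hq))
      rw [← hSP, hP, hQ] at h3
      have : ε * S.h ≤ ε * (HH p id + HH q id) := mul_le_mul_of_nonneg_left hle hε.le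
      linarith
end PF


namespace PF

lemma IsDist_Pr {A : Type} [Fintype A] {p : A → ℝ} (h : IsDist p) : Pr p :=
  ⟨h.1, by rw [← h.2, finsum_eq_sum_of_fintype]⟩

lemma ent_eq {A : Type} [Fintype A] (p : A → ℝ) : ent p = HH p id := by
  rw [HH_id]; exact finsum_eq_sum_of_fintype _

lemma push_eq {A B : Type} [Fintype A] (f : A → B) (p : A → ℝ) : push f p = law p f := by
  classical
  funext b
  unfold push law
  rw [finsum_eq_sum_of_fintype]
  refine Finset.sum_congr rfl fun a _ => ?_
  by_cases h : f a = b
  · rw [ind_true h, finsum_eq_if]; simp [h]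
  · rw [ind_false h, finsum_eq_if]; simp [h]

lemma ent_push {A B : Type} [Fintype A] [Fintype B] (f : A → B) (p : A → ℝ) :
    ent (push f p) = HH p f := by
  rw [push_eq, ent_eq, HH_id, HH_eq_law]

lemma ent_conv {G : Type} [AddCommGroup G] [Fintype G] (p q : G → ℝ) :
    ent (conv p q) = Hc p q := by
  rw [Hc_eq]
  unfold ent conv
  rw [finsum_eq_sum_of_fintype]
  simp only [finsum_eq_sum_of_fintype]

lemma ent_unif {G : Type} [AddCommGroup G] [Fintype G] (V : AddSubgroup G) (s : Set G)
    (hs : s = V) : ent (unifOn s) = Real.log (Nat.card V) := by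
  classical
  subst hs
  unfold ent unifOn
  rw [finsum_eq_sum_of_fintype]
  have : ∀ a, negMulLog ((V : Set G).indicator (fun _ => (Nat.card (V : Set G) : ℝ)⁻¹) a) =
      if a ∈ V then negMulLog ((Nat.card V : ℝ)⁻¹) else 0 := by
    intro a
    by_cases h : a ∈ V
    · simp [h]
    · simp [h]
  simp_rw [this]
  rw [← Finset.sum_filter, Finset.sum_const, nsmul_eq_mul]
  have hc : (Finset.univ.filter (fun a => a ∈ V)).card = Nat.card V := by
    rw [Nat.card_eq_fintype_card, Fintype.card_subtype]
  rw [hc, negMulLog, Real.log_inv]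
  have : (Nat.card V : ℝ) ≠ 0 := by exact_mod_cast Nat.card_pos.ne'
  field_simp

lemma map_add_ofLaw {G G' : Type} [AddCommGroup G] [Fintype G] [AddCommGroup G'] [Fintype G']
    (σ : G →+ G') (p q : G → ℝ) (hp : Pr p) (hq : Pr q) :
    (Ker.map σ (Ker.add (Ker.ofLaw p hp) (Ker.ofLaw q hq))).h = Hc (law p σ) (law q σ) := by
  have a1 : (Ker.map σ (Ker.add (Ker.ofLaw p hp) (Ker.ofLaw q hq))).h =
      HH (pd p q) (fun x => (σ (x.1 + x.2), ((), ()))) - HH (pd p q) (fun _ => ((), ())) := rfl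
  rw [a1, HH_const (hp.pd hq) (fun _ => ((), ())) (fun _ _ => rfl), sub_zero]
  unfold Hc
  rw [← ((push_law p σ).prod (push_law q σ)).HH]
  refine HH_congr' _ _ fun x y => ?_
  simp

end PF

/-- For every `ε > 0` there is `L > 0` such that for independent finitely
supported `X, Y` on `𝔽₂ⁿ` there is a subspace `V` with `H[𝐔_V] ≤ L(H[X]+H[Y])` and
`H[π_V(X)+π_V(Y)] ≥ H[π_V(X)] + H[π_V(Y)] − ε(H[X]+H[Y])`. -/
theorem statement1 :
    ∀ ε : ℝ, 0 < ε → ∃ L : ℝ, 0 < L ∧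
      ∀ (n : ℕ) (p q : Fvec n → ℝ), IsDist p → IsDist q →
        ∃ V : Submodule (ZMod 2) (Fvec n),
          ent (unifOn (V : Set (Fvec n))) ≤ L * (ent p + ent q) ∧
          ent (conv (push V.mkQ p) (push V.mkQ q)) ≥
            ent (push V.mkQ p) + ent (push V.mkQ q) - ε * (ent p + ent q) := by
  intro ε hε
  obtain ⟨L, hL, H⟩ := PF.outer (min ε 1) (lt_min hε one_pos) (min_le_right _ _)
  refine ⟨L, hL, fun n p q hp hq => ?_⟩
  have hp' := PF.IsDist_Pr hp
  have hq' := PF.IsDist_Pr hq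
  have h2 : ∀ x : Fvec n, x + x = 0 := fun x => by
    funext i
    exact CharTwo.add_self_eq_zero (x i)
  obtain ⟨V, h1, h3⟩ := H (Fvec n) h2 p q hp' hq'
  have hp0 := PF.HH_nonneg hp' id
  have hq0 := PF.HH_nonneg hq' id
  let W : Submodule (ZMod 2) (Fvec n) := AddSubgroup.toZModSubmodule 2 V
  have hW : (W : Set (Fvec n)) = V := rfl
  have : Fintype (Fvec n ⧸ W) := Fintype.ofFinite _
  have hcong : ∀ x y : Fvec n, QuotientAddGroup.mk' V x = QuotientAddGroup.mk' V y ↔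
      W.mkQ x = W.mkQ y := by
    intro x y
    rw [Submodule.mkQ_apply, Submodule.mkQ_apply, Submodule.Quotient.eq, eq_comm]
    simp only [QuotientAddGroup.mk'_apply, QuotientAddGroup.eq]
    rw [neg_add_eq_sub]
    rfl
  refine ⟨W, ?_, ?_⟩
  · rw [PF.ent_unif V _ hW, PF.ent_eq, PF.ent_eq]
    exact h1
  · rw [PF.ent_conv, PF.ent_push, PF.ent_push, PF.ent_eq p, PF.ent_eq q, PF.push_eq, PF.push_eq]
    rw [PF.h_map_congr _ W.mkQ _ hcong, PF.HH_congr' _ _ hcong, PF.HH_congr' _ _ hcong] at h3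
    have e := PF.map_add_ofLaw W.mkQ.toAddMonoidHom p q hp' hq'
    have h4 := mul_le_mul_of_nonneg_right (min_le_left ε 1) (add_nonneg hp0 hq0)
    have e' : (PF.Ker.map W.mkQ (PF.Ker.add (PF.Ker.ofLaw p hp') (PF.Ker.ofLaw q hq'))).h =
      PF.Hc (PF.law p W.mkQ) (PF.law q W.mkQ) := e
    rw [e'] at h3
    linarith
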